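/- arXiv:2009.04757 — 4 statements merged into one kernel-verified Lean document; each statement's English description precedes it below -/
import Mathlib

section
/- The Chowla conjecture implies Sarnak's conjecture: if lim_{N→∞} (1/N) Σ_{n≤N} μ^{j_0}(n+k_0) μ^{j_1}(n+k_1)⋯μ^{j_r}(n+k_r) = 0 whenever r ≥ 0, 0 ≤ k_0 < k_1 < ... < k_r are integers and j_0,...,j_r ∈ {1,2} are not all equal to 2, then every topological dynamical system (T,X) with h_top(T,X) = 0 is Möbius orthogonal. -/
open Filter Topology

noncomputable def csAvg (g : ℕ → ℝ) (N : ℕ) : ℝ := (1 / (N : ℝ)) * ∑ n ∈ Finset.Icc 1 N, g n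

def CsChowla : Prop := ∀ (r : ℕ) (k : Fin (r + 1) → ℕ), StrictMono k →
      ∀ j : Fin (r + 1) → ℕ, (∀ i, j i = 1 ∨ j i = 2) → (∃ i, j i = 1) →
        Tendsto
          (fun N : ℕ => (1 / (N : ℝ)) *
            ∑ n ∈ Finset.Icc 1 N,
              ∏ i, ((ArithmeticFunction.moebius (n + k i) : ℤ) : ℝ) ^ (j i))
          atTop (nhds 0)

noncomputable def csM (n : ℕ) : ℝ := ((ArithmeticFunction.moebius n : ℤ) : ℝ)

lemma csM_cases (n : ℕ) : csM n = 0 ∨ csM n = 1 ∨ csM n = -1 := by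
  unfold csM
  rcases ArithmeticFunction.moebius_eq_or n with h | h | h <;> simp [h]

lemma csM_abs (n : ℕ) : |csM n| ≤ 1 := by
  rcases csM_cases n with h | h | h <;> simp [h]

lemma csAvg_mono {f g : ℕ → ℝ} (h : ∀ n, f n ≤ g n) (N : ℕ) : csAvg f N ≤ csAvg g N := by
  unfold csAvg
  exact mul_le_mul_of_nonneg_left (Finset.sum_le_sum fun n _ => h n) (by positivity)

lemma csAvg_add (f g : ℕ → ℝ) (N : ℕ) :
    csAvg (fun n => f n + g n) N = csAvg f N + csAvg g N := by
  simp [csAvg, Finset.sum_add_distrib, mul_add]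

lemma csAvg_mul (c : ℝ) (g : ℕ → ℝ) (N : ℕ) :
    csAvg (fun n => c * g n) N = c * csAvg g N := by
  simp only [csAvg, ← Finset.mul_sum]; ring

lemma csAvg_sum {ι : Type*} (s : Finset ι) (g : ι → ℕ → ℝ) (N : ℕ) :
    csAvg (fun n => ∑ i ∈ s, g i n) N = ∑ i ∈ s, csAvg (g i) N := by
  simp only [csAvg]
  rw [Finset.sum_comm, Finset.mul_sum]

lemma csAvg_const {N : ℕ} (hN : 1 ≤ N) (c : ℝ) : csAvg (fun _ => c) N = c := by
  have : (N : ℝ) ≠ 0 := by positivity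
  simp [csAvg]; field_simp

lemma csChowla_fin (hC : CsChowla) (L : ℕ) (p : Fin L → Fin 3) (hp : ∃ i, p i = 1) :
    Tendsto (csAvg fun n => ∏ h : Fin L, csM (n + h) ^ (p h : ℕ)) atTop (nhds 0) := by
  classical
  obtain ⟨i0, hi0⟩ := hp
  set S : Finset (Fin L) := Finset.univ.filter fun h => p h ≠ 0 with hS
  have hi0S : i0 ∈ S := by simp [hS, hi0]
  obtain ⟨r, hr⟩ : ∃ r, S.card = r + 1 :=
    ⟨S.card - 1, by have := Finset.card_pos.2 ⟨i0, hi0S⟩; omega⟩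
  have key := hC r (fun i => (S.orderEmbOfFin hr i : ℕ))
    (fun a b hab => (S.orderEmbOfFin hr).strictMono hab)
    (fun i => (p (S.orderEmbOfFin hr i) : ℕ)) (by
      intro i
      have h1 := S.orderEmbOfFin_mem hr i
      have h2 : p (S.orderEmbOfFin hr i) ≠ 0 :=
        (Finset.mem_filter.1 h1).2
      generalize p (S.orderEmbOfFin hr i) = q at h2
      fin_cases q <;> simp at h2 ⊢) (by
      have : i0 ∈ Set.range (S.orderEmbOfFin hr) := by
        rw [Finset.range_orderEmbOfFin]; exact hi0S
      obtain ⟨i, hi⟩ := this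
      exact ⟨i, by simp [hi, hi0]⟩)
  refine key.congr fun N => ?_
  unfold csAvg
  congr 1
  refine Finset.sum_congr rfl fun n _ => ?_
  have h1 : ∏ h : Fin L, csM (n + h) ^ (p h : ℕ) = ∏ h ∈ S, csM (n + h) ^ (p h : ℕ) := by
    symm
    apply Finset.prod_subset (Finset.subset_univ _)
    intro h _ hh
    have : p h = 0 := by simpa [hS] using hh
    simp [this]
  refine Eq.trans ?_ h1.symm
  have h2 : S = Finset.univ.map (S.orderEmbOfFin hr).toEmbedding := by
    ext a
    have h3 : a ∈ Set.range (S.orderEmbOfFin hr) ↔ a ∈ (S : Set (Fin L)) := by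
      rw [Finset.range_orderEmbOfFin S hr]
    rw [Finset.mem_map, ← Finset.mem_coe, ← h3]
    simp only [Set.mem_range, Finset.mem_univ, true_and]
    rfl
  conv_rhs => rw [h2]
  rw [Finset.prod_map]
  rfl

lemma csExp_expand (t m : ℝ) (hm : m = 0 ∨ m = 1 ∨ m = -1) :
    Real.exp (t * m) = ∑ i : Fin 3, (![1, Real.sinh t, Real.cosh t - 1] i) * m ^ (i : ℕ) := by
  rw [Fin.sum_univ_three]
  rcases hm with rfl | rfl | rfl
  · simp
  · simp [Real.sinh_eq, Real.cosh_eq]; ring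
  · simp [Real.sinh_eq, Real.cosh_eq]; ring

lemma csExp_moment (hC : CsChowla) (L : ℕ) (c : Fin L → ℝ) (B : ℝ) (hB : ∀ h, |c h| ≤ B)
    (η : ℝ) (hη : 0 < η) :
    ∀ᶠ N in atTop, csAvg (fun n => Real.exp (∑ h : Fin L, c h * csM (n + h))) N
      ≤ Real.exp (L * (B ^ 2 / 2)) + η := by
  classical
  set a : Fin L → Fin 3 → ℝ := fun h => ![1, Real.sinh (c h), Real.cosh (c h) - 1] with ha
  set b : Fin L → Fin 3 → ℝ := fun h => ![1, 0, Real.cosh (c h) - 1] with hb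
  have e1 : ∀ n, Real.exp (∑ h : Fin L, c h * csM (n + h)) =
      (∏ h : Fin L, ∑ i : Fin 3, b h i * csM (n + h) ^ (i : ℕ)) +
      ∑ p : Fin L → Fin 3, ((∏ h, a h (p h)) - ∏ h, b h (p h)) *
        ∏ h : Fin L, csM (n + h) ^ (p h : ℕ) := by
    intro n
    rw [Real.exp_sum, Finset.prod_congr rfl fun h _ => csExp_expand (c h) _ (csM_cases (n + h))]
    rw [Finset.prod_univ_sum, Finset.prod_univ_sum, Fintype.piFinset_univ,
      ← Finset.sum_add_distrib]
    refine Finset.sum_congr rfl fun p _ => ?_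
    rw [Finset.prod_mul_distrib, Finset.prod_mul_distrib]
    simp only [ha]
    ring
  have e2 : ∀ n, (∏ h : Fin L, ∑ i : Fin 3, b h i * csM (n + h) ^ (i : ℕ))
      ≤ Real.exp (L * (B ^ 2 / 2)) := by
    intro n
    have : Real.exp (L * (B ^ 2 / 2)) = ∏ h : Fin L, Real.exp (B ^ 2 / 2) := by
      rw [← Real.exp_sum]; simp
    rw [this]
    have hv : ∀ h : Fin L, ∑ i : Fin 3, b h i * csM (n + h) ^ (i : ℕ)
        = 1 + (Real.cosh (c h) - 1) * csM (n + h) ^ 2 := by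
      intro h; rw [Fin.sum_univ_three]; simp [hb]
    apply Finset.prod_le_prod
    · intro h _
      rw [hv]
      have := Real.one_le_cosh (c h)
      have h2 : 0 ≤ (Real.cosh (c h) - 1) * csM (n + h) ^ 2 :=
        mul_nonneg (by linarith) (sq_nonneg _)
      linarith
    · intro h _
      rw [hv]
      have h1 := Real.one_le_cosh (c h)
      have h2 : csM (n + h) ^ 2 ≤ 1 := by
        rcases csM_cases (n + h) with h | h | h <;> simp [h]
      have h3 := Real.cosh_le_exp_half_sq (c h)
      have h4 : c h ^ 2 ≤ B ^ 2 := sq_le_sq' (by have := abs_le.1 (hB h); linarith)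
        (by have := abs_le.1 (hB h); linarith)
      have h5 : Real.exp (c h ^ 2 / 2) ≤ Real.exp (B ^ 2 / 2) := by gcongr
      nlinarith
  have e3 : Tendsto (csAvg fun n => ∑ p : Fin L → Fin 3, ((∏ h, a h (p h)) - ∏ h, b h (p h)) *
        ∏ h : Fin L, csM (n + h) ^ (p h : ℕ)) atTop (nhds 0) := by
    have : Tendsto (fun N => ∑ p : Fin L → Fin 3, ((∏ h, a h (p h)) - ∏ h, b h (p h)) *
        csAvg (fun n => ∏ h : Fin L, csM (n + h) ^ (p h : ℕ)) N) atTop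
        (nhds (∑ p : Fin L → Fin 3, 0)) := by
      refine tendsto_finsetSum _ fun p _ => ?_
      by_cases hp : ∃ i, p i = 1
      · simpa using (csChowla_fin hC L p hp).const_mul _
      · have : (∏ h, a h (p h)) = ∏ h, b h (p h) := by
          refine Finset.prod_congr rfl fun h _ => ?_
          have h1 : p h ≠ 1 := fun h' => hp ⟨h, h'⟩
          simp only [ha, hb]
          generalize p h = q at h1
          fin_cases q <;> simp at h1 ⊢
        simp [this]
    rw [Finset.sum_const_zero] at this
    refine this.congr fun N => ?_
    rw [csAvg_sum]
    exact Finset.sum_congr rfl fun p _ => (csAvg_mul _ _ _).symm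
  filter_upwards [e3.eventually (gt_mem_nhds hη), eventually_ge_atTop 1] with N hN hN1
  simp only [e1]
  rw [csAvg_add]
  have := csAvg_mono e2 N
  rw [csAvg_const hN1] at this
  linarith

lemma csAvg_shift (a : ℕ → ℝ) (M : ℝ) (ha : ∀ n, |a n| ≤ M) (h : ℕ) :
    Tendsto (fun N => csAvg (fun n => a (n + h)) N - csAvg a N) atTop (nhds 0) := by
  induction h with
  | zero => simp
  | succ h ih =>
    have key : Tendsto (fun N : ℕ => (1 / (N : ℝ)) * (a (N + 1 + h) - a (1 + h))) atTop
        (nhds 0) := by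
      refine tendsto_one_div_atTop_nhds_zero_nat.zero_mul_isBoundedUnder_le ?_
      refine ⟨2 * M, ?_⟩
      simp only [eventually_map]
      refine Eventually.of_forall fun N => ?_
      simp only [Function.comp, Real.norm_eq_abs]
      have h1 := abs_le.1 (ha (N + 1 + h))
      have h2 := abs_le.1 (ha (1 + h))
      rw [abs_le]; constructor <;> linarith
    have := ih.add key
    rw [add_zero] at this
    refine this.congr fun N => ?_
    have tel : ∑ n ∈ Finset.Icc 1 N, a (n + (h + 1)) =
        ∑ n ∈ Finset.Icc 1 N, a (n + h) + (a (N + 1 + h) - a (1 + h)) := by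
      induction N with
      | zero => simp
      | succ N ihN =>
        rw [Finset.sum_Icc_succ_top (by omega), Finset.sum_Icc_succ_top (by omega), ihN]
        rw [show N + 1 + (h + 1) = N + 1 + 1 + h by ring]
        ring
    simp only [csAvg, tel]
    ring

lemma csCover {X : Type} [MetricSpace X] [CompactSpace X] (T : X → X)
    (hT : Dynamics.coverEntropy T Set.univ = 0) (ρ δ : ℝ) (hρ : 0 < ρ) (hδ : 0 < δ) :
    ∃ L : ℕ, 1 ≤ L ∧ ∃ s : Finset X, (s.card : ℝ) ≤ Real.exp (δ * L) ∧
      ∀ x, ∃ y ∈ s, ∀ k < L, dist (T^[k] x) (T^[k] y) < ρ := by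
  have h1 := Dynamics.coverEntropyEntourage_le_coverEntropy T Set.univ
    (Metric.dist_mem_uniformity hρ)
  rw [hT] at h1
  have h2 := ExpGrowth.eventually_le_exp (h1.trans_lt (EReal.coe_pos.2 hδ))
  obtain ⟨L, hL, hL1⟩ := (h2.and (eventually_ge_atTop 1)).exists
  have e : EReal.exp ((δ : EReal) * (L : EReal)) = ENNReal.ofReal (Real.exp (δ * L)) := by
    rw [← EReal.exp_coe]; push_cast; rfl
  rw [e] at hL
  have hfin : Dynamics.coverMincard T Set.univ {p : X × X | dist p.1 p.2 < ρ} L < ⊤ := by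
    rw [lt_top_iff_ne_top]
    intro h
    rw [h] at hL
    simp at hL
  obtain ⟨s, hs, hcard⟩ := (Dynamics.coverMincard_finite_iff _ _ _ _).1 hfin
  refine ⟨L, hL1, s, ?_, fun x => ?_⟩
  · rw [← hcard] at hL
    have : ((s.card : ℕ) : ENNReal) ≤ ENNReal.ofReal (Real.exp (δ * L)) := by simpa using hL
    rw [← ENNReal.ofReal_natCast] at this
    exact (ENNReal.ofReal_le_ofReal_iff (Real.exp_pos _).le).1 this
  · obtain ⟨y, hy, hxy⟩ := hs (Set.mem_univ x)
    exact ⟨y, hy, fun k hk => (Dynamics.mem_dynEntourage.1 hxy) k hk⟩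

lemma csReal_upper (hC : CsChowla) {X : Type} [MetricSpace X] [CompactSpace X] (T : X → X)
    (hT : Dynamics.coverEntropy T Set.univ = 0) (g : X → ℝ) (hg : Continuous g) (x : X)
    (ε : ℝ) (hε : 0 < ε) :
    ∀ᶠ N in atTop, csAvg (fun n => g (T^[n] x) * csM n) N ≤ 5 * ε := by
  obtain ⟨M, hM1, hM⟩ : ∃ M : ℝ, 1 ≤ M ∧ ∀ y, |g y| ≤ M := by
    obtain ⟨C, hCb⟩ := isCompact_univ.exists_bound_of_continuousOn hg.continuousOn
    exact ⟨max C 1, le_max_right _ _, fun y => (hCb y trivial).trans (le_max_left _ _)⟩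
  have hM0 : 0 < M := by linarith
  obtain ⟨ρ, hρ, hρg⟩ := Metric.uniformContinuous_iff.1
    (CompactSpace.uniformContinuous_of_continuous hg) ε hε
  set l : ℝ := ε / M ^ 2 with hl
  have hl0 : 0 < l := by positivity
  have hlM : l * M ^ 2 = ε := by rw [hl]; field_simp
  obtain ⟨L, hL1, s, hcard, hcov⟩ := csCover T hT ρ (l * ε) hρ (by positivity)
  have hL0 : (0 : ℝ) < L := by exact_mod_cast hL1
  set a : ℕ → ℝ := fun n => g (T^[n] x) * csM n with ha
  have haM : ∀ n, |a n| ≤ M := fun n => by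
    rw [ha, abs_mul]
    calc _ ≤ M * 1 := mul_le_mul (hM _) (csM_abs n) (abs_nonneg _) hM0.le
      _ = M := mul_one M
  set E : ℝ := Real.exp (L * ((l * M) ^ 2 / 2)) with hE
  have hE0 : 0 < E := Real.exp_pos _
  set K : ℝ := (l * ε) * L + L * ((l * M) ^ 2 / 2) with hK
  have hK2 : K = l * (3 / 2 * ε * L) := by
    rw [hK, ← hlM]; ring
  set F : X → ℕ → ℝ := fun y n => Real.exp (∑ h : Fin L, (l * g (T^[h] y)) * csM (n + h)) with hF
  -- pointwise bound
  have pt : ∀ n, l * ∑ h : Fin L, a (n + h) ≤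
      (l * ε * L + (K - 1)) + Real.exp (-K) * ∑ y ∈ s, F y n := by
    intro n
    obtain ⟨y, hy, hxy⟩ := hcov (T^[n] x)
    have h1 : ∑ h : Fin L, a (n + h) ≤ ∑ h : Fin L, (ε + g (T^[h] y) * csM (n + h)) := by
      refine Finset.sum_le_sum fun h _ => ?_
      have h2 := hρg (hxy h h.2)
      rw [← Function.iterate_add_apply, add_comm (h : ℕ) n, Real.dist_eq] at h2
      have h3 : (g (T^[n + h] x) - g (T^[h] y)) * csM (n + h) ≤ ε := by
        refine (le_abs_self _).trans ?_
        rw [abs_mul]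
        calc _ ≤ ε * 1 := mul_le_mul h2.le (csM_abs _) (abs_nonneg _) hε.le
          _ = ε := mul_one ε
      simp only [ha]
      linarith
    have h4 : l * ∑ h : Fin L, a (n + h) ≤
        l * ε * L + ∑ h : Fin L, (l * g (T^[h] y)) * csM (n + h) := by
      have h5 := mul_le_mul_of_nonneg_left h1 hl0.le
      rw [Finset.sum_add_distrib, mul_add,
        Finset.mul_sum (f := fun h : Fin L => g (T^[h] y) * csM (n + h))] at h5
      simp only [Finset.sum_const, Finset.card_univ, Fintype.card_fin, nsmul_eq_mul] at h5
      simp only [mul_assoc] at h5 ⊢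
      linarith
    have h6 : F y n ≤ ∑ y ∈ s, F y n :=
      Finset.single_le_sum (f := fun y => F y n) (fun y _ => (Real.exp_pos _).le) hy
    have h7 := Real.add_one_le_exp (-K + ∑ h : Fin L, (l * g (T^[h] y)) * csM (n + h))
    rw [Real.exp_add] at h7
    have h8 := mul_le_mul_of_nonneg_left h6 (Real.exp_pos (-K)).le
    simp only [hF] at h8 ⊢
    linarith
  have ev1 : ∀ᶠ N in atTop, ∀ y ∈ s, csAvg (F y) N ≤ E + E * (l * ε * L) := by
    rw [Filter.eventually_all_finset]
    intro y _
    refine csExp_moment hC L (fun h => l * g (T^[h] y)) (l * M) (fun h => ?_) _ (by positivity)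
    rw [abs_mul, abs_of_pos hl0]
    exact mul_le_mul_of_nonneg_left (hM _) hl0.le
  have ev2 : ∀ᶠ N in atTop, ∀ h : Fin L, csAvg a N ≤ csAvg (fun n => a (n + h)) N + ε := by
    rw [Filter.eventually_all]
    intro h
    filter_upwards [(csAvg_shift a M haM h).eventually (lt_mem_nhds (neg_lt_zero.2 hε))] with N hN
    linarith
  filter_upwards [ev1, ev2, eventually_ge_atTop 1] with N h1 h2 hN
  have h3 := csAvg_mono pt N
  rw [csAvg_mul, csAvg_add, csAvg_mul, csAvg_const hN, csAvg_sum, csAvg_sum] at h3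
  have h4 : (L : ℝ) * csAvg a N ≤ ∑ h : Fin L, csAvg (fun n => a (n + h)) N + L * ε := by
    have := Finset.sum_le_sum fun h (_ : h ∈ (Finset.univ : Finset (Fin L))) => h2 h
    simpa [Finset.sum_add_distrib] using this
  have h5 : ∑ y ∈ s, csAvg (F y) N ≤ Real.exp (l * ε * L) * (E + E * (l * ε * L)) := by
    calc _ ≤ ∑ y ∈ s, (E + E * (l * ε * L)) := Finset.sum_le_sum h1
      _ = s.card * (E + E * (l * ε * L)) := by rw [Finset.sum_const, nsmul_eq_mul]
      _ ≤ _ := mul_le_mul_of_nonneg_right hcard (by positivity)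
  have h6 : Real.exp (-K) * ∑ y ∈ s, csAvg (F y) N ≤ 1 + l * ε * L := by
    have h7 := mul_le_mul_of_nonneg_left h5 (Real.exp_pos (-K)).le
    have h8 : Real.exp (-K) * (Real.exp (l * ε * L) * E) = 1 := by
      rw [hE, ← Real.exp_add, ← Real.exp_add, hK]; simp
    calc _ ≤ _ := h7
      _ = Real.exp (-K) * (Real.exp (l * ε * L) * E) * (1 + l * ε * L) := by ring
      _ = _ := by rw [h8, one_mul]
  have h9 : l * ∑ h : Fin L, csAvg (fun n => a (n + h)) N ≤ l * (7 / 2 * ε * L) := by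
    rw [hK2] at h3
    rw [← hK2] at h3
    linarith
  have h10 := le_of_mul_le_mul_left h9 hl0
  have h11 : (L : ℝ) * csAvg a N ≤ L * (5 * ε) := by nlinarith
  exact le_of_mul_le_mul_left h11 hL0

lemma csReal (hC : CsChowla) {X : Type} [MetricSpace X] [CompactSpace X] (T : X → X)
    (hT : Dynamics.coverEntropy T Set.univ = 0) (g : X → ℝ) (hg : Continuous g) (x : X) :
    Tendsto (csAvg (fun n => g (T^[n] x) * csM n)) atTop (nhds 0) := by
  rw [Metric.tendsto_nhds]
  intro ε hε
  filter_upwards [csReal_upper hC T hT g hg x (ε / 10) (by positivity),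
    csReal_upper hC T hT (fun y => - g y) hg.neg x (ε / 10) (by positivity)] with N h1 h2
  have : csAvg (fun n => - g (T^[n] x) * csM n) N = - csAvg (fun n => g (T^[n] x) * csM n) N := by
    rw [← neg_one_mul, ← csAvg_mul]; congr 1; ext n; ring
  rw [this] at h2
  rw [Real.dist_eq, sub_zero, abs_lt]
  constructor <;> linarith

/-- The Chowla conjecture implies Sarnak's conjecture: if all Chowla-type correlations of
the Möbius function vanish, then every topological dynamical system `(T,X)` (a
homeomorphism `T` of a compact metric space `X`) with zero topological entropy is
Möbius orthogonal. -/
theorem chowla_implies_sarnak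
    (hChowla : ∀ (r : ℕ) (k : Fin (r + 1) → ℕ), StrictMono k →
      ∀ j : Fin (r + 1) → ℕ, (∀ i, j i = 1 ∨ j i = 2) → (∃ i, j i = 1) →
        Tendsto
          (fun N : ℕ => (1 / (N : ℝ)) *
            ∑ n ∈ Finset.Icc 1 N,
              ∏ i, ((ArithmeticFunction.moebius (n + k i) : ℤ) : ℝ) ^ (j i))
          atTop (nhds 0)) :
    ∀ (X : Type) [MetricSpace X] [CompactSpace X] (T : X ≃ₜ X),
      Dynamics.coverEntropy (⇑T) Set.univ = 0 →
      ∀ (f : C(X, ℂ)) (x : X),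
        Tendsto
          (fun N : ℕ => (1 / (N : ℂ)) *
            ∑ n ∈ Finset.Icc 1 N, f ((⇑T)^[n] x) * (ArithmeticFunction.moebius n : ℂ))
          atTop (nhds 0) := by
  intro X _ _ T hT f x
  have hC : CsChowla := hChowla
  have h1 := csReal hC T hT (fun y => (f y).re) (Complex.continuous_re.comp f.continuous) x
  have h2 := csReal hC T hT (fun y => (f y).im) (Complex.continuous_im.comp f.continuous) x
  have h3 := ((Complex.continuous_ofReal.tendsto 0).comp h1).add
    (((Complex.continuous_ofReal.tendsto 0).comp h2).mul_const Complex.I)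
  simp only [Complex.ofReal_zero, zero_mul, add_zero] at h3
  refine h3.congr fun N => ?_
  simp only [Function.comp, csAvg, csM]
  push_cast
  rw [mul_assoc, ← mul_add, Finset.sum_mul, ← Finset.sum_add_distrib]
  congr 1
  refine Finset.sum_congr rfl fun n _ => ?_
  conv_rhs => rw [← Complex.re_add_im (f (T^[n] x))]
  ring
end

section
/- Let (T,X) be a topological dynamical system, x ∈ X, and let ν be a T-invariant Borel probability measure on X which is ergodic. If x is logarithmically quasi-generic for ν, then x is quasi-generic for ν. -/
open Filter Topology MeasureTheory

theorem aux_log (a : ℕ → ℝ) (ha : ∀ n, 0 ≤ a n) (N : ℕ → ℕ) (hN : StrictMono N) (L c : ℝ)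
    (hc0 : 0 ≤ c) (hLc : L < c)
    (h : Tendsto (fun k : ℕ => (1 / Real.log (N k)) * ∑ n ∈ Finset.Icc 1 (N k), a n / n)
      atTop (nhds L)) :
    ∃ᶠ m : ℕ in atTop, ∑ n ∈ Finset.Icc 1 m, a n < c * m := by
  intro hcon
  simp only [not_lt] at hcon
  obtain ⟨m0, hm0⟩ := eventually_atTop.1 hcon
  set S : ℕ → ℝ := fun m => ∑ n ∈ Finset.Icc 1 m, a n with hS
  set R : ℕ → ℝ := fun m => ∑ n ∈ Finset.Icc 1 m, a n / n with hR
  have hS1 : ∀ m, S (m+1) = S m + a (m+1) := fun m => by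
    simp only [hS]; rw [Finset.sum_Icc_succ_top (by omega)]
  have hR1 : ∀ m, R (m+1) = R m + a (m+1) / ((m:ℝ)+1) := fun m => by
    simp only [hR]; rw [Finset.sum_Icc_succ_top (by omega)]; push_cast; rfl
  have hS0 : ∀ m, 0 ≤ S m := fun m => Finset.sum_nonneg fun n _ => ha n
  set m1 := m0 + 1 with hm1
  obtain ⟨C, hC⟩ : ∃ C : ℝ, ∀ m ≥ m1, c * Real.log (m+1) - C ≤ R m - S m / m := by
    refine ⟨c * Real.log (m1+1) - (R m1 - S m1 / m1), fun m hm => ?_⟩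
    induction m, hm using Nat.le_induction with
    | base => linarith
    | succ m hm ih =>
      have hmpos : (0:ℝ) < m := by exact_mod_cast (by omega : 0 < m)
      have h1 : c * m ≤ S m := hm0 m (by omega)
      have h2 : R (m+1) - S (m+1) / ((m:ℝ)+1) = R m - S m / m + S m / m / (m+1) := by
        rw [hR1, hS1]; field_simp; ring
      have h3 : c ≤ S m / m := by rw [le_div_iff₀ hmpos]; exact h1
      have h4 : Real.log ((m:ℝ)+1+1) - Real.log (m+1) ≤ 1 / ((m:ℝ)+1) := by
        rw [← Real.log_div (by positivity) (by positivity)]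
        refine (Real.log_le_sub_one_of_pos (by positivity)).trans (le_of_eq ?_)
        field_simp; ring
      have h5 : c * (1 / ((m:ℝ)+1)) ≤ S m / m / (m+1) := by
        rw [mul_one_div]; gcongr
      have h6 := mul_le_mul_of_nonneg_left h4 hc0
      push_cast
      rw [h2]
      linarith
  have hNt : Tendsto (fun k => Real.log (N k)) atTop atTop :=
    Real.tendsto_log_atTop.comp (tendsto_natCast_atTop_atTop.comp hN.tendsto_atTop)
  have hlim : Tendsto (fun k => c - C * (Real.log (N k))⁻¹) atTop (nhds (c - C * 0)) :=
    tendsto_const_nhds.sub (tendsto_const_nhds.mul (tendsto_inv_atTop_zero.comp hNt))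
  have hle : c - C * 0 ≤ L := by
    refine le_of_tendsto_of_tendsto hlim h ?_
    filter_upwards [hNt.eventually_gt_atTop 0, hN.tendsto_atTop.eventually_ge_atTop m1]
      with k hk hk2
    have h1 := hC _ hk2
    have h2 : 0 ≤ S (N k) / N k := div_nonneg (hS0 _) (by positivity)
    have hpos : (0:ℝ) < N k := by exact_mod_cast (by omega : 0 < N k)
    have h3 : Real.log (N k) ≤ Real.log ((N k : ℝ)+1) := Real.log_le_log hpos (by linarith)
    have h4 := mul_le_mul_of_nonneg_left h3 hc0
    have h5 : c * Real.log (N k) - C ≤ R (N k) := by linarith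
    change _ ≤ 1 / Real.log (N k) * R (N k)
    have : c - C * (Real.log (N k))⁻¹ = 1 / Real.log (N k) * (c * Real.log (N k) - C) := by
      field_simp
    rw [this]
    gcongr
  linarith

theorem aux_tele (b : ℕ → ℝ) (m h : ℕ) :
    ∑ n ∈ Finset.Icc 1 m, b (n + (h+1)) - ∑ n ∈ Finset.Icc 1 m, b (n + h)
        = b (m + h + 1) - b (h + 1) := by
  induction m with
  | zero => simp
  | succ m ihm =>
    rw [Finset.sum_Icc_succ_top (by omega), Finset.sum_Icc_succ_top (by omega)]
    have e1 : m + 1 + (h + 1) = m + 1 + h + 1 := by omega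
    have e2 : m + 1 + h = m + h + 1 := by omega
    rw [e1, e2]
    linarith

theorem aux_shift (b : ℕ → ℝ) (B : ℝ) (hB : ∀ n, |b n| ≤ B) (m h : ℕ) :
    |∑ n ∈ Finset.Icc 1 m, b (n + h) - ∑ n ∈ Finset.Icc 1 m, b n| ≤ 2 * h * B := by
  induction h with
  | zero => simp
  | succ h ih =>
    have key := aux_tele b m h
    have h1 := abs_le.1 (hB (m+h+1))
    have h2 := abs_le.1 (hB (h+1))
    have h3 := abs_le.1 ih
    push_cast
    rw [abs_le]
    constructor <;> linarith

/-- Birkhoff average as a continuous map. -/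
noncomputable def avgC {X : Type} [TopologicalSpace X] (T : X ≃ₜ X) (f : C(X, ℝ)) (H : ℕ) :
    C(X, ℝ) :=
  (H:ℝ)⁻¹ • ∑ k ∈ Finset.range H, f.comp ⟨(⇑T)^[k], T.continuous.iterate k⟩

theorem avgC_apply {X : Type} [TopologicalSpace X] (T : X ≃ₜ X) (f : C(X, ℝ)) (H : ℕ) (y : X) :
    avgC T f H y = (H:ℝ)⁻¹ * ∑ k ∈ Finset.range H, f ((⇑T)^[k] y) := by
  simp [avgC, ContinuousMap.sum_apply]

theorem aux_mean {X : Type} [MetricSpace X] [CompactSpace X] [MeasurableSpace X] [BorelSpace X]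
    (T : X ≃ₜ X) (ν : Measure X) [IsProbabilityMeasure ν]
    (hErg : Ergodic (⇑T) ν) (f : C(X, ℝ)) (hf : ∫ y, f y ∂ν = 0) (ε : ℝ) (hε : 0 < ε) :
    ∃ H : ℕ, 0 < H ∧ ∫ y, (avgC T f H y)^2 ∂ν < ε := by
  have hmp := hErg.toMeasurePreserving
  let U : Lp ℝ 2 ν →L[ℝ] Lp ℝ 2 ν :=
    (Lp.compMeasurePreservingₗᵢ ℝ (⇑T) hmp).toContinuousLinearMap
  have hU : ‖U‖ ≤ 1 := LinearIsometry.norm_toContinuousLinearMap_le _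
  let J := ContinuousMap.toLp (E := ℝ) 2 ν ℝ
  have hJ : ∀ g : C(X, ℝ), J g =ᵐ[ν] g := fun g => ContinuousMap.coeFn_toLp ν g
  have hUc : ∀ G : Lp ℝ 2 ν, U G =ᵐ[ν] G ∘ T := fun G => Lp.coeFn_compMeasurePreserving G hmp
  have hUJ : ∀ g : C(X, ℝ), J (g.comp ⟨T, T.continuous⟩) = U (J g) := by
    intro g
    apply Lp.ext
    refine (hJ _).trans (((hUc (J g)).trans ?_).symm)
    exact hmp.quasiMeasurePreserving.ae_eq_comp (hJ g)
  have hUJk : ∀ k : ℕ, J (f.comp ⟨(⇑T)^[k], T.continuous.iterate k⟩) = U^[k] (J f) := by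
    intro k
    induction k with
    | zero => simp; congr 1
    | succ k ih =>
      rw [Function.iterate_succ_apply', ← ih, ← hUJ]
      congr 1
  have havg : ∀ H, J (avgC T f H) = birkhoffAverage ℝ U _root_.id H (J f) := by
    intro H
    simp [avgC, birkhoffAverage, birkhoffSum, hUJk]
  have ht := U.tendsto_birkhoffAverage_orthogonalProjection hU (J f)
  set K := (U.eqLocus (1 : Lp ℝ 2 ν →L[ℝ] Lp ℝ 2 ν)) with hK
  set p := K.orthogonalProjectionOnto (J f) with hp
  have hp0 : (p : Lp ℝ 2 ν) = 0 := by
    have hfix : U (p : Lp ℝ 2 ν) = p := p.2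
    obtain ⟨d, hd⟩ := hErg.ae_eq_const_of_ae_eq_comp_ae (Lp.aestronglyMeasurable (p : Lp ℝ 2 ν))
      ((hUc p).symm.trans (by rw [hfix]))
    have h1 : inner ℝ (J f) (p : Lp ℝ 2 ν) = 0 := by
      rw [L2.inner_def]
      have : (fun a => inner ℝ ((J f : Lp ℝ 2 ν) a) ((p : Lp ℝ 2 ν) a)) =ᵐ[ν] fun a => d * f a := by
        filter_upwards [hd, hJ f] with a h1 h2
        rw [h1, h2]; simp
      rw [integral_congr_ae this, integral_const_mul, hf, mul_zero]
    have h2 : inner ℝ (p : Lp ℝ 2 ν) (p : Lp ℝ 2 ν) = inner ℝ (J f) (p : Lp ℝ 2 ν) := by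
      have := Submodule.starProjection_inner_eq_zero (K := K) (J f) p p.2
      rw [inner_sub_left, sub_eq_zero] at this
      exact this.symm
    rw [h1] at h2
    exact inner_self_eq_zero.1 h2
  rw [hp0] at ht
  have ht2 := (ht.norm.pow 2)
  simp only [norm_zero, ne_eq, OfNat.ofNat_ne_zero, not_false_eq_true, zero_pow] at ht2
  obtain ⟨H, hH1, hH2⟩ := ((ht2.eventually_lt_const hε).and (eventually_gt_atTop 0)).exists
  refine ⟨H, hH2, ?_⟩
  rw [← havg, ← real_inner_self_eq_norm_sq, L2.inner_def] at hH1
  refine lt_of_eq_of_lt (integral_congr_ae ?_) hH1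
  filter_upwards [hJ (avgC T f H)] with a ha
  rw [ha]; simp [sq]

theorem aux_cesaro {X : Type} [MetricSpace X] [CompactSpace X]
    (T : X ≃ₜ X) (x : X) (f : C(X, ℝ)) (H m : ℕ) (hH : 0 < H) :
    |∑ n ∈ Finset.Icc 1 m, avgC T f H ((⇑T)^[n] x) - ∑ n ∈ Finset.Icc 1 m, f ((⇑T)^[n] x)|
      ≤ 2 * H * ‖f‖ := by
  have hHp : (0:ℝ) < H := by exact_mod_cast hH
  have e : ∑ n ∈ Finset.Icc 1 m, avgC T f H ((⇑T)^[n] x) - ∑ n ∈ Finset.Icc 1 m, f ((⇑T)^[n] x)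
      = (H:ℝ)⁻¹ * ∑ k ∈ Finset.range H, (∑ n ∈ Finset.Icc 1 m, f ((⇑T)^[n+k] x)
        - ∑ n ∈ Finset.Icc 1 m, f ((⇑T)^[n] x)) := by
    simp only [avgC_apply]
    rw [← Finset.mul_sum, Finset.sum_comm, Finset.sum_sub_distrib, mul_sub]
    simp only [← Function.iterate_add_apply, Finset.sum_const, Finset.card_range, nsmul_eq_mul]
    rw [inv_mul_cancel_left₀ hHp.ne']
    simp only [add_comm]
  rw [e, abs_mul, abs_of_pos (inv_pos.2 hHp), inv_mul_le_iff₀ hHp]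
  refine (Finset.abs_sum_le_sum_abs _ _).trans ?_
  refine (Finset.sum_le_card_nsmul _ _ (2 * H * ‖f‖) fun k hk => ?_).trans (by simp)
  refine (aux_shift (fun n => f ((⇑T)^[n] x)) ‖f‖ (fun n => f.norm_coe_le_norm _) m k).trans ?_
  have : (k:ℝ) ≤ H := by exact_mod_cast (Finset.mem_range.1 hk).le
  gcongr

theorem aux_main
    {X : Type} [MetricSpace X] [CompactSpace X] [MeasurableSpace X] [BorelSpace X]
    (T : X ≃ₜ X) (x : X) (ν : Measure X) [IsProbabilityMeasure ν]
    (hErg : Ergodic (⇑T) ν) (N : ℕ → ℕ) (hN : StrictMono N)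
    (hlog : ∀ f : C(X, ℝ),
      Tendsto
        (fun k : ℕ => (1 / Real.log (N k)) *
          ∑ n ∈ Finset.Icc 1 (N k), f ((⇑T)^[n] x) / n)
        atTop (nhds (∫ y, f y ∂ν)))
    (u : ℕ → C(X, ℝ)) (hu : ∀ j, ∫ y, u j y ∂ν = 0) (k : ℕ) (ε : ℝ) (hε : 0 < ε) :
    ∃ᶠ m : ℕ in atTop, ∀ j < k, |(1 / (m:ℝ)) * ∑ n ∈ Finset.Icc 1 m, u j ((⇑T)^[n] x)| < ε := by
  set δ : ℝ := (ε/2)^2 with hδ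
  have hδ0 : 0 < δ := by positivity
  choose H hH0 hH using fun j => aux_mean T ν hErg (u j) (hu j) (δ / (k+1)) (by positivity)
  let g : C(X, ℝ) := ∑ j ∈ Finset.range k, (avgC T (u j) (H j))^2
  have hg : ∀ y, g y = ∑ j ∈ Finset.range k, (avgC T (u j) (H j) y)^2 := fun y => by
    simp [g, ContinuousMap.sum_apply]
  have hint : ∀ q : C(X, ℝ), Integrable q ν := fun q =>
    q.continuous.integrable_of_hasCompactSupport (HasCompactSupport.of_compactSpace _)
  have hgi : ∫ y, g y ∂ν < δ := by
    simp only [hg]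
    rw [integral_finsetSum (f := fun j y => (avgC T (u j) (H j) y)^2) _
      (fun j _ => hint ((avgC T (u j) (H j))^2))]
    calc _ ≤ ∑ j ∈ Finset.range k, δ / (k+1) := Finset.sum_le_sum fun j _ => (hH j).le
      _ = k * (δ / (k+1)) := by simp
      _ < δ := by
        rw [mul_div_assoc', div_lt_iff₀ (by positivity)]; nlinarith
  have hfr := aux_log (fun n => g ((⇑T)^[n] x))
    (fun n => by rw [hg]; exact Finset.sum_nonneg fun j _ => sq_nonneg _) N hN _ δ hδ0.le hgi
    (hlog g)
  have hev : ∀ᶠ m : ℕ in atTop, ∀ j ∈ Finset.range k, 2 * H j * ‖u j‖ / (m:ℝ) < ε / 2 := by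
    rw [Filter.eventually_all_finset]
    intro j _
    exact (tendsto_const_div_atTop_nhds_zero_nat _).eventually_lt_const (by positivity)
  refine (hfr.and_eventually (hev.and (eventually_gt_atTop 0))).mono ?_
  rintro m ⟨h1, h2, h3⟩ j hj
  have hm : (0:ℝ) < m := by exact_mod_cast h3
  have h4 := h2 j (Finset.mem_range.2 hj)
  have h5 := aux_cesaro T x (u j) (H j) m (hH0 j)
  set A := ∑ n ∈ Finset.Icc 1 m, avgC T (u j) (H j) ((⇑T)^[n] x) with hA
  set S := ∑ n ∈ Finset.Icc 1 m, u j ((⇑T)^[n] x) with hS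
  have h6 : ∑ n ∈ Finset.Icc 1 m, (avgC T (u j) (H j) ((⇑T)^[n] x))^2 < δ * m := by
    refine lt_of_le_of_lt (Finset.sum_le_sum fun n _ => ?_) h1
    rw [hg]
    exact Finset.single_le_sum (f := fun j => (avgC T (u j) (H j) ((⇑T)^[n] x))^2)
      (fun _ _ => sq_nonneg _) (Finset.mem_range.2 hj)
  have h7 : A^2 ≤ m * ∑ n ∈ Finset.Icc 1 m, (avgC T (u j) (H j) ((⇑T)^[n] x))^2 := by
    have := sq_sum_le_card_mul_sum_sq (s := Finset.Icc 1 m)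
      (f := fun n => avgC T (u j) (H j) ((⇑T)^[n] x))
    simpa using this
  have h8 : A^2 < (ε/2 * m)^2 := by
    calc _ ≤ _ := h7
      _ < m * (δ * m) := by gcongr
      _ = _ := by rw [hδ]; ring
  have h9 : |A| < ε/2 * m := abs_lt_of_sq_lt_sq h8 (by positivity)
  rw [div_lt_iff₀ hm] at h4
  rw [abs_mul, abs_of_pos (by positivity : (0:ℝ) < 1 / m), one_div, inv_mul_lt_iff₀ hm]
  have h10 := abs_lt.1 h9
  have h11 := abs_le.1 h5
  rw [abs_lt]
  constructor <;> nlinarith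

/-- If `x` is logarithmically quasi-generic for an ergodic `T`-invariant Borel
probability measure `ν` (convergence of logarithmic empirical measures along a
subsequence, in the weak-* topology, expressed by testing against continuous
functions), then `x` is quasi-generic for `ν`. -/
theorem log_quasi_generic_ergodic_implies_quasi_generic
    {X : Type} [MetricSpace X] [CompactSpace X] [MeasurableSpace X] [BorelSpace X]
    (T : X ≃ₜ X) (x : X) (ν : Measure X) [IsProbabilityMeasure ν]
    (hErg : Ergodic (⇑T) ν)
    (hlog : ∃ N : ℕ → ℕ, StrictMono N ∧ ∀ f : C(X, ℝ),
      Tendsto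
        (fun k : ℕ => (1 / Real.log (N k)) *
          ∑ n ∈ Finset.Icc 1 (N k), f ((⇑T)^[n] x) / n)
        atTop (nhds (∫ y, f y ∂ν))) :
    ∃ M : ℕ → ℕ, StrictMono M ∧ ∀ f : C(X, ℝ),
      Tendsto
        (fun k : ℕ => (1 / (M k : ℝ)) * ∑ n ∈ Finset.Icc 1 (M k), f ((⇑T)^[n] x))
        atTop (nhds (∫ y, f y ∂ν)) := by
  obtain ⟨N, hN, hlog⟩ := hlog
  have hint : ∀ q : C(X, ℝ), Integrable q ν := fun q =>
    q.continuous.integrable_of_hasCompactSupport (HasCompactSupport.of_compactSpace _)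
  let w : ℕ → C(X, ℝ) := TopologicalSpace.denseSeq C(X, ℝ)
  let u : ℕ → C(X, ℝ) := fun j => w j - ContinuousMap.const X (∫ y, w j y ∂ν)
  have hu : ∀ j, ∫ y, u j y ∂ν = 0 := fun j => by
    simp only [u, ContinuousMap.sub_apply, ContinuousMap.const_apply]
    rw [integral_sub (hint _) (integrable_const _)]
    simp
  obtain ⟨φ, hφ, hφ2⟩ := extraction_forall_of_frequently (fun k : ℕ =>
    (aux_main T x ν hErg N hN hlog u hu k (1 / ((k:ℝ)+1)) (by positivity)).and_eventually
      (eventually_gt_atTop 0))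
  refine ⟨φ, hφ, fun f => ?_⟩
  rw [Metric.tendsto_atTop]
  intro ε hε
  obtain ⟨j, hj⟩ := (TopologicalSpace.denseRange_denseSeq C(X, ℝ)).exists_dist_lt f
    (by positivity : 0 < ε / 3)
  change dist f (w j) < ε / 3 at hj
  obtain ⟨k0, hk0⟩ := exists_nat_one_div_lt (by positivity : 0 < ε / 3)
  refine ⟨max k0 (j+1), fun k hk => ?_⟩
  have hkj : j < k := by have := le_max_right k0 (j+1); omega
  have hkk : k0 ≤ k := (le_max_left _ _).trans hk
  obtain ⟨h1, h2⟩ := hφ2 k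
  have h1 := h1 j hkj
  have hm : (0:ℝ) < φ k := by exact_mod_cast h2
  have h3 : 1 / ((k:ℝ)+1) ≤ 1 / ((k0:ℝ)+1) := by gcongr
  set m := φ k
  have hpt : ∀ y, |f y - w j y| ≤ ε / 3 := fun y =>
    ((ContinuousMap.dist_apply_le_dist y).trans hj.le)
  have e1 : (1 / (m:ℝ)) * ∑ n ∈ Finset.Icc 1 m, u j ((⇑T)^[n] x)
      = (1 / (m:ℝ)) * ∑ n ∈ Finset.Icc 1 m, w j ((⇑T)^[n] x) - ∫ y, w j y ∂ν := by
    simp only [u, ContinuousMap.sub_apply, ContinuousMap.const_apply, Finset.sum_sub_distrib]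
    simp
    field_simp
  have e2 : |∫ y, f y ∂ν - ∫ y, w j y ∂ν| ≤ ε / 3 := by
    rw [← integral_sub (hint _) (hint _)]
    have := norm_integral_le_of_norm_le_const (μ := ν) (f := fun y => f y - w j y)
      (Eventually.of_forall hpt)
    simpa using this
  have e3 : |(1 / (m:ℝ)) * ∑ n ∈ Finset.Icc 1 m, f ((⇑T)^[n] x)
      - (1 / (m:ℝ)) * ∑ n ∈ Finset.Icc 1 m, w j ((⇑T)^[n] x)| ≤ ε / 3 := by
    rw [← mul_sub, ← Finset.sum_sub_distrib, abs_mul, abs_of_pos (by positivity : (0:ℝ) < 1 / m),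
      one_div, inv_mul_le_iff₀ hm]
    refine (Finset.abs_sum_le_sum_abs _ _).trans ?_
    refine (Finset.sum_le_card_nsmul _ _ (ε/3) fun n _ => hpt _).trans (by simp)
  rw [e1] at h1
  have a1 := abs_lt.1 h1
  have a2 := abs_le.1 e2
  have a3 := abs_le.1 e3
  rw [Real.dist_eq, abs_lt]
  constructor <;> linarith
end

section
/- Let (T,X) be a topological dynamical system, x ∈ X, and let ν be an ergodic T-invariant Borel probability measure on X. If ν is the only measure for which x is logarithmically quasi-generic (i.e., (1/log N) Σ_{n≤N} (1/n) δ_{T^n x} → ν in the weak-* topology as N → ∞), then there exists a set A ⊆ ℕ of logarithmic density 1 such that (1/N) Σ_{n≤N} δ_{T^n x} → ν in the weak-* topology as N → ∞ along N ∈ A. -/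
open Filter Topology MeasureTheory


noncomputable def lavg (u : ℕ → ℝ) (M : ℕ) : ℝ := (1 / Real.log M) * ∑ n ∈ Finset.Icc 1 M, u n / n

lemma lavg_mono {u v : ℕ → ℝ} (h : ∀ n, 1 ≤ n → u n ≤ v n) (M : ℕ) : lavg u M ≤ lavg v M := by
  unfold lavg
  have : 0 ≤ Real.log (M:ℝ) := Real.log_natCast_nonneg M
  gcongr with n hn
  exact h n (Finset.mem_Icc.1 hn).1

lemma lavg_nonneg {u : ℕ → ℝ} (h : ∀ n, 1 ≤ n → 0 ≤ u n) (M : ℕ) : 0 ≤ lavg u M := by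
  have := lavg_mono (u := fun _ => 0) h M
  simpa [lavg] using this

lemma lavg_add (u v : ℕ → ℝ) (M : ℕ) : lavg (fun n => u n + v n) M = lavg u M + lavg v M := by
  simp [lavg, add_div, Finset.sum_add_distrib, mul_add]

lemma lavg_sub (u v : ℕ → ℝ) (M : ℕ) : lavg (fun n => u n - v n) M = lavg u M - lavg v M := by
  simp [lavg, sub_div, Finset.sum_sub_distrib, mul_sub]

lemma lavg_smul (c : ℝ) (u : ℕ → ℝ) (M : ℕ) : lavg (fun n => c * u n) M = c * lavg u M := by
  simp only [lavg, mul_div_assoc, ← Finset.mul_sum]; ring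

noncomputable def cavg (u : ℕ → ℝ) (N : ℕ) : ℝ := (1 / (N:ℝ)) * ∑ n ∈ Finset.Icc 1 N, u n

lemma sum_cavg_le {g : ℕ → ℝ} (hg : ∀ n, 0 ≤ g n) (M : ℕ) :
    ∑ n ∈ Finset.Icc 1 M, cavg g n / n ≤ 2 * (∑ n ∈ Finset.Icc 1 M, g n / n) - cavg g M := by
  induction M with
  | zero => simp [cavg]
  | succ M ih =>
    rw [Finset.sum_Icc_succ_top (by omega), Finset.sum_Icc_succ_top (by omega)]
    have key : cavg g (M+1) / ((M+1:ℕ):ℝ) ≤ 2 * (g (M+1) / ((M+1:ℕ):ℝ)) + cavg g M - cavg g (M+1) := by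
      unfold cavg
      rw [Finset.sum_Icc_succ_top (by omega)]
      have h1 := hg (M+1)
      have hG : 0 ≤ ∑ n ∈ Finset.Icc 1 M, g n := Finset.sum_nonneg (fun i _ => hg i)
      rcases Nat.eq_zero_or_pos M with rfl | hM
      · simp; linarith
      generalize ∑ n ∈ Finset.Icc 1 M, g n = G at *
      generalize g (M+1) = y at *
      have hm : (0:ℝ) < M := by exact_mod_cast hM
      push_cast
      have : 2 * (y / ((M:ℝ)+1)) + 1 / (M:ℝ) * G - 1 / ((M:ℝ)+1) * (G + y) - 1 / ((M:ℝ)+1) * (G + y) / ((M:ℝ)+1)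
         = (G + M * M * y) / (M * ((M:ℝ)+1)^2) := by
        field_simp; ring
      have : 0 ≤ (G + M * M * y) / (M * ((M:ℝ)+1)^2) := by positivity
      linarith
    linarith

lemma lavg_cavg_le {g : ℕ → ℝ} (hg : ∀ n, 0 ≤ g n) (M : ℕ) : lavg (cavg g) M ≤ 2 * lavg g M := by
  have h := sum_cavg_le hg M
  have h2 : 0 ≤ cavg g M := by
    unfold cavg
    exact mul_nonneg (by positivity) (Finset.sum_nonneg (fun i _ => hg i))
  have h3 : 0 ≤ 1 / Real.log (M:ℝ) := by
    have := Real.log_natCast_nonneg M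
    positivity
  unfold lavg
  have := mul_le_mul_of_nonneg_left (h.trans (sub_le_self _ h2)) h3
  linarith

lemma lavg_inv : Tendsto (lavg (fun n => 1 / (n:ℝ))) atTop (𝓝 0) := by
  have hl : Tendsto (fun M : ℕ => 2 * (1 / Real.log (M:ℝ))) atTop (𝓝 0) := by
    have := (tendsto_inv_atTop_zero.comp (Real.tendsto_log_atTop.comp tendsto_natCast_atTop_atTop)).const_mul 2
    simpa using this
  refine tendsto_of_tendsto_of_tendsto_of_le_of_le' tendsto_const_nhds hl
    (Eventually.of_forall fun M => lavg_nonneg (fun n _ => by positivity) M) ?_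
  filter_upwards [eventually_ge_atTop 1] with M hM
  have h := lavg_cavg_le (g := fun n => if n = 1 then 1 else 0) (fun n => by split_ifs <;> simp) M
  have h2 : lavg (fun n => if n = 1 then 1 else 0) M = 1 / Real.log (M:ℝ) := by
    unfold lavg
    rw [Finset.sum_eq_single 1]
    · simp
    · intro b _ hb; simp [hb]
    · intro hb; simp at hb; omega
  rw [h2] at h
  refine le_trans (lavg_mono (fun n hn => ?_) M) h
  unfold cavg
  rw [Finset.sum_ite_eq' ]
  simp [hn]

lemma kvn {u : ℕ → ℝ} (hu : ∀ n, 0 ≤ u n) (h0 : Tendsto (lavg u) atTop (𝓝 0))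
    (h1 : Tendsto (lavg (fun _ => 1)) atTop (𝓝 1)) :
    ∃ A : Set ℕ, Tendsto (lavg (Set.indicator A (fun _ => 1))) atTop (𝓝 1) ∧
      Tendsto u (atTop ⊓ 𝓟 A) (𝓝 0) := by
  have hL : ∀ n, 0 ≤ lavg u n := lavg_nonneg (fun n _ => hu n)
  have hbdd := h0.bddAbove_range
  have hbdd' : ∀ N, BddAbove (Set.range fun k => lavg u (N + k)) := fun N =>
    hbdd.mono (by rintro _ ⟨k, rfl⟩; exact ⟨_, rfl⟩)
  set e : ℕ → ℝ := fun N => (⨆ k, lavg u (N + k)) + 1 / ((N:ℝ)+1) with he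
  have hle : ∀ N, lavg u N ≤ e N := fun N => by
    have := le_ciSup (hbdd' N) 0
    have h2 : 0 ≤ 1 / ((N:ℝ)+1) := by positivity
    simp only [he]; simp only [add_zero] at this; linarith
  have hpos : ∀ N, 0 < e N := fun N => by
    have := le_ciSup (hbdd' N) 0
    have h2 : 0 < 1 / ((N:ℝ)+1) := by positivity
    have := hL N
    simp only [he]; simp only [add_zero] at *; linarith
  have hanti : ∀ N M, N ≤ M → e M ≤ e N := fun N M h => by
    simp only [he]
    have : (⨆ k, lavg u (M + k)) ≤ ⨆ k, lavg u (N + k) := by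
      refine ciSup_le fun k => ?_
      have := le_ciSup (hbdd' N) (M - N + k)
      simpa [show N + (M - N + k) = M + k by omega] using this
    gcongr
  have hto : Tendsto e atTop (𝓝 0) := by
    have : Tendsto (fun N => ⨆ k, lavg u (N + k)) atTop (𝓝 0) := by
      rw [Metric.tendsto_atTop]
      intro ε hε
      obtain ⟨N0, hN⟩ := (Metric.tendsto_atTop.1 h0) (ε/2) (by positivity)
      refine ⟨N0, fun N hn => ?_⟩
      have h3 : (⨆ k, lavg u (N + k)) ≤ ε/2 := ciSup_le fun k => by
        have := hN (N+k) (by omega)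
        rw [Real.dist_eq, sub_zero] at this
        exact (le_abs_self _).trans this.le
      have h4 : 0 ≤ ⨆ k, lavg u (N + k) := Real.iSup_nonneg fun k => hL _
      rw [Real.dist_eq, sub_zero, abs_of_nonneg h4]; linarith
    simpa [he] using this.add tendsto_one_div_add_atTop_nhds_zero_nat
  have hsq : Tendsto (fun N => Real.sqrt (e N)) atTop (𝓝 0) := by
    simpa using hto.sqrt
  refine ⟨{N | u N ≤ Real.sqrt (e N)}, ?_, ?_⟩
  · set A : Set ℕ := {N | u N ≤ Real.sqrt (e N)}
    have hc : Tendsto (lavg (Set.indicator Aᶜ (fun _ => 1))) atTop (𝓝 0) := by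
      refine tendsto_of_tendsto_of_tendsto_of_le_of_le tendsto_const_nhds hsq
        (fun M => lavg_nonneg (fun n _ => Set.indicator_nonneg (by simp) _) M) ?_
      intro M
      have hs : 0 < Real.sqrt (e M) := Real.sqrt_pos.2 (hpos M)
      have h5 : lavg (Set.indicator Aᶜ (fun _ => 1)) M ≤ lavg (fun n => (1 / Real.sqrt (e M)) * u n) M := by
        have : 0 ≤ Real.log (M:ℝ) := Real.log_natCast_nonneg M
        unfold lavg
        gcongr with n hn
        by_cases hA : n ∈ A
        · simp [hA]; exact mul_nonneg (by positivity) (hu n)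
        · rw [Set.indicator_of_mem (by exact hA)]
          have h6 : Real.sqrt (e n) < u n := not_le.1 hA
          have h7 := Real.sqrt_le_sqrt (hanti n M (Finset.mem_Icc.1 hn).2)
          beta_reduce
          rw [one_div, ← div_eq_inv_mul, le_div_iff₀ hs]; linarith
      rw [lavg_smul] at h5
      refine h5.trans ?_
      rw [one_div, ← div_eq_inv_mul, div_le_iff₀ hs, Real.mul_self_sqrt (hpos M).le]
      exact hle M
    have h8 := h1.sub hc
    rw [sub_zero] at h8
    refine h8.congr fun M => ?_
    rw [← lavg_sub]
    congr 1
    ext n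
    by_cases hA : n ∈ A <;> simp [hA]
  · refine tendsto_of_tendsto_of_tendsto_of_le_of_le' tendsto_const_nhds (hsq.mono_left inf_le_left)
      (Eventually.of_forall hu) ?_
    exact Filter.mem_inf_of_right (by intro n hn; exact hn)

lemma combine {s : ℕ → ℕ → ℝ} (hs : ∀ k n, 0 ≤ s k n) (h0 : ∀ k, Tendsto (lavg (s k)) atTop (𝓝 0))
    (h1 : Tendsto (lavg (fun _ => 1)) atTop (𝓝 1)) :
    ∃ A : Set ℕ, Tendsto (lavg (Set.indicator A (fun _ => 1))) atTop (𝓝 1) ∧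
      ∀ k, Tendsto (s k) (atTop ⊓ 𝓟 A) (𝓝 0) := by
  set t : ℕ → ℕ → ℝ := fun k n => min 1 (s k n) with ht
  have t0 : ∀ k n, 0 ≤ t k n := fun k n => le_min zero_le_one (hs k n)
  have t1 : ∀ k n, t k n ≤ 1 := fun k n => min_le_left _ _
  have sg : Summable (fun k : ℕ => (1/2:ℝ)^k) := summable_geometric_two
  have hsum : ∀ n, Summable (fun k => (1/2:ℝ)^k * t k n) := fun n =>
    Summable.of_nonneg_of_le (fun k => mul_nonneg (by positivity) (t0 k n))
      (fun k => mul_le_of_le_one_right (by positivity) (t1 k n)) sg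
  set u : ℕ → ℝ := fun n => ∑' k, (1/2:ℝ)^k * t k n with hu
  have hu0 : ∀ n, 0 ≤ u n := fun n => tsum_nonneg fun k => mul_nonneg (by positivity) (t0 k n)
  have hlav : ∀ M, lavg u M = ∑' k, (1/2:ℝ)^k * lavg (t k) M := fun M => by
    unfold lavg
    simp only [hu]
    have : ∀ n ∈ Finset.Icc 1 M, (∑' k, (1/2:ℝ)^k * t k n) / (n:ℝ) = ∑' k, (1/2:ℝ)^k * t k n / n :=
      fun n _ => (tsum_div_const).symm
    rw [Finset.sum_congr rfl this, ← Summable.tsum_finsetSum (fun n _ => (hsum n).div_const _), ← tsum_mul_left]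
    congr 1; ext k
    simp only [mul_div_assoc, ← Finset.mul_sum]; ring
  have hB := h1.bddAbove_range
  obtain ⟨B, hB⟩ := hB
  have hB' : ∀ M, lavg (fun _ => 1) M ≤ B := fun M => hB ⟨M, rfl⟩
  have hto : Tendsto (lavg u) atTop (𝓝 0) := by
    have h := tendsto_tsum_of_dominated_convergence (𝓕 := atTop) (f := fun M k => (1/2:ℝ)^k * lavg (t k) M)
      (g := fun _ => (0:ℝ)) (bound := fun k => (1/2:ℝ)^k * B) (sg.mul_right B) ?_ ?_
    · simpa [funext hlav] using h
    · intro k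
      have : Tendsto (lavg (t k)) atTop (𝓝 0) :=
        tendsto_of_tendsto_of_tendsto_of_le_of_le tendsto_const_nhds (h0 k)
          (lavg_nonneg fun n _ => t0 k n) (lavg_mono fun n _ => min_le_right _ _)
      simpa using this.const_mul ((1/2:ℝ)^k)
    · refine Eventually.of_forall fun M k => ?_
      have h2 := lavg_nonneg (fun n _ => t0 k n) M
      rw [Real.norm_of_nonneg (by positivity)]
      gcongr
      exact (lavg_mono (fun n _ => t1 k n) M).trans (hB' M)
  obtain ⟨A, hA, hA'⟩ := kvn hu0 hto h1
  refine ⟨A, hA, fun k => ?_⟩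
  have h3 : Tendsto (fun n => 2^k * u n) (atTop ⊓ 𝓟 A) (𝓝 0) := by simpa using hA'.const_mul (2^k)
  have h4 : Tendsto (t k) (atTop ⊓ 𝓟 A) (𝓝 0) := by
    refine tendsto_of_tendsto_of_tendsto_of_le_of_le tendsto_const_nhds h3 (t0 k) fun n => ?_
    have := (hsum n).le_tsum k (fun j _ => mul_nonneg (by positivity) (t0 j n))
    calc t k n = 2^k * ((1/2:ℝ)^k * t k n) := by rw [← mul_assoc, ← mul_pow]; simp
      _ ≤ 2^k * u n := by gcongr
  refine h4.congr' ?_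
  filter_upwards [h4.eventually (gt_mem_nhds (zero_lt_one (α := ℝ)))] with n hn
  simp only [ht] at hn ⊢
  rcases min_lt_iff.1 hn with h | h
  · exact absurd h (lt_irrefl _)
  · exact min_eq_right h.le

noncomputable def koop {X : Type} [TopologicalSpace X] (T : X ≃ₜ X) (f : C(X, ℝ)) : C(X, ℝ) :=
  f.comp ⟨T, T.continuous⟩

lemma koop_iter {X : Type} [TopologicalSpace X] (T : X ≃ₜ X) (f : C(X, ℝ)) (h : ℕ) (y : X) :
    ((koop T)^[h] f) y = f ((⇑T)^[h] y) := by
  induction h generalizing y with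
  | zero => rfl
  | succ h ih =>
    rw [Function.iterate_succ_apply', Function.iterate_succ_apply]
    exact ih (T y)

noncomputable def bavg {X : Type} [TopologicalSpace X] (T : X ≃ₜ X) (f : C(X, ℝ)) (H : ℕ) : C(X, ℝ) :=
  (H:ℝ)⁻¹ • ∑ h ∈ Finset.range H, (koop T)^[h] f

lemma bavg_apply {X : Type} [TopologicalSpace X] (T : X ≃ₜ X) (f : C(X, ℝ)) (H : ℕ) (y : X) :
    bavg T f H y = (H:ℝ)⁻¹ * ∑ h ∈ Finset.range H, f ((⇑T)^[h] y) := by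
  simp [bavg, koop_iter]

lemma mean_erg {X : Type} [MetricSpace X] [CompactSpace X] [MeasurableSpace X] [BorelSpace X]
    (T : X ≃ₜ X) (ν : Measure X) [IsProbabilityMeasure ν]
    (hErg : Ergodic (⇑T) ν) (f : C(X, ℝ)) (hf : ∫ y, f y ∂ν = 0) :
    Tendsto (fun H : ℕ => ∫ y, (bavg T f H y)^2 ∂ν) atTop (𝓝 0) := by
  let U : Lp ℝ 2 ν →ₗᵢ[ℝ] Lp ℝ 2 ν := Lp.compMeasurePreservingₗᵢ ℝ (⇑T) hErg.toMeasurePreserving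
  let V : Lp ℝ 2 ν →L[ℝ] Lp ℝ 2 ν := U.toContinuousLinearMap
  let j : C(X, ℝ) →L[ℝ] Lp ℝ 2 ν := ContinuousMap.toLp 2 ν ℝ
  have hV : ‖V‖ ≤ 1 := U.norm_toContinuousLinearMap_le
  have hj : ∀ g : C(X, ℝ), V (j g) = j (koop T g) := fun g => rfl
  have hit : ∀ h : ℕ, (⇑V)^[h] (j f) = j ((koop T)^[h] f) := fun h => by
    induction h with
    | zero => rfl
    | succ h ih => rw [Function.iterate_succ_apply', Function.iterate_succ_apply', ih, hj]
  have hb : ∀ H, birkhoffAverage ℝ V _root_.id H (j f) = j (bavg T f H) := fun H => by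
    simp only [birkhoffAverage, birkhoffSum, bavg, map_smul, map_sum, _root_.id, hit]
  have hn : ∀ g : C(X, ℝ), ‖j g‖^2 = ∫ y, (g y)^2 ∂ν := fun g => by
    rw [← real_inner_self_eq_norm_sq, L2.inner_def]
    refine integral_congr_ae ?_
    filter_upwards [ContinuousMap.coeFn_toLp (p := 2) (𝕜 := ℝ) ν g] with y hy
    have : (j g) y = g y := hy
    rw [this]; simp [sq]
  have hp := V.tendsto_birkhoffAverage_orthogonalProjection hV (j f)
  set K := V.eqLocus (1 : Lp ℝ 2 ν →L[ℝ] Lp ℝ 2 ν) with hK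
  set p : K := K.orthogonalProjectionOnto (j f) with hpdef
  have hpz : (p : Lp ℝ 2 ν) = 0 := by
    have hfix : V (p : Lp ℝ 2 ν) = p := p.2
    have hae : ((p : Lp ℝ 2 ν) : X → ℝ) ∘ T =ᵐ[ν] ((p : Lp ℝ 2 ν) : X → ℝ) := by
      have := Lp.coeFn_compMeasurePreserving (p : Lp ℝ 2 ν) hErg.toMeasurePreserving
      have h2 : Lp.compMeasurePreserving (⇑T) hErg.toMeasurePreserving (p : Lp ℝ 2 ν) = p := hfix
      rw [h2] at this
      exact this.symm
    obtain ⟨c, hc⟩ := hErg.ae_eq_const_of_ae_eq_comp_ae (Lp.aestronglyMeasurable _) hae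
    have hin : inner ℝ (p : Lp ℝ 2 ν) (j f) = 0 := by
      rw [L2.inner_def]
      have : ∫ y, c * f y ∂ν = 0 := by rw [integral_const_mul, hf, mul_zero]
      rw [← this]
      refine integral_congr_ae ?_
      filter_upwards [hc, ContinuousMap.coeFn_toLp (p := 2) (𝕜 := ℝ) ν f] with y hy1 hy
      have h3 : (j f) y = f y := hy
      rw [h3, hy1]; simp [mul_comm]
    have hpp : inner ℝ (p : Lp ℝ 2 ν) (j f - p) = 0 :=
      (K.sub_starProjection_mem_orthogonal (j f)) p p.2
    rw [inner_sub_right, hin, zero_sub, neg_eq_zero] at hpp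
    exact inner_self_eq_zero.1 hpp
  rw [hpz] at hp
  have := hp.norm.pow 2
  simp only [hb, hn] at this
  simpa using this

lemma sum_tele (a : ℕ → ℝ) (N h : ℕ) :
    ∑ n ∈ Finset.Icc 1 N, a (n + h) - ∑ n ∈ Finset.Icc 1 N, a (n + (h + 1)) = a (1 + h) - a (N + 1 + h) := by
  induction N with
  | zero => simp
  | succ N ih =>
    rw [Finset.sum_Icc_succ_top (by omega), Finset.sum_Icc_succ_top (by omega)]
    rw [show N + 1 + (h + 1) = N + 1 + 1 + h by omega]
    linarith

lemma sum_shift (a : ℕ → ℝ) (N h : ℕ) {B : ℝ} (hB : ∀ n, |a n| ≤ B) :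
    |∑ n ∈ Finset.Icc 1 N, a n - ∑ n ∈ Finset.Icc 1 N, a (n + h)| ≤ 2 * B * h := by
  induction h with
  | zero => simp
  | succ h ih =>
    have h1 := sum_tele a N h
    have h2 := abs_le.1 (hB (1 + h))
    have h3 := abs_le.1 (hB (N + 1 + h))
    rw [abs_le] at ih ⊢
    push_cast
    constructor <;> linarith

lemma cavg_sq_le (u : ℕ → ℝ) (N : ℕ) : (cavg u N)^2 ≤ cavg (fun n => (u n)^2) N := by
  unfold cavg
  have h := sq_sum_le_card_mul_sum_sq (s := Finset.Icc 1 N) (f := u)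
  rcases Nat.eq_zero_or_pos N with rfl | hN
  · simp
  have hN' : (0:ℝ) < N := by exact_mod_cast hN
  simp only [Nat.card_Icc, add_tsub_cancel_right] at h
  rw [mul_pow]
  calc (1 / (N:ℝ))^2 * (∑ i ∈ Finset.Icc 1 N, u i)^2 ≤ (1 / (N:ℝ))^2 * (N * ∑ i ∈ Finset.Icc 1 N, u i ^ 2) := by gcongr
    _ = _ := by field_simp

lemma cavg_err (a : ℕ → ℝ) {B : ℝ} (hB : ∀ n, |a n| ≤ B) (hB0 : 0 ≤ B) (H : ℕ) (hH0 : 0 < H)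
    (F : ℕ → ℝ) (hFa : ∀ n, F n = (H:ℝ)⁻¹ * ∑ h ∈ Finset.range H, a (n + h)) (N : ℕ) :
    |cavg a N - cavg F N| ≤ 1 / (N:ℝ) * (2 * B * H) := by
  have hHr : (0:ℝ) < H := by exact_mod_cast hH0
  have e1 : cavg a N - cavg F N =
      1 / (N:ℝ) * ((H:ℝ)⁻¹ * ∑ h ∈ Finset.range H,
        (∑ n ∈ Finset.Icc 1 N, a n - ∑ n ∈ Finset.Icc 1 N, a (n + h))) := by
    unfold cavg
    simp only [hFa, ← Finset.mul_sum]
    rw [Finset.sum_comm, Finset.sum_sub_distrib, Finset.sum_const, Finset.card_range, nsmul_eq_mul]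
    field_simp
  rw [e1, abs_mul, abs_of_nonneg (by positivity : 0 ≤ 1 / (N:ℝ)), abs_mul, abs_of_nonneg (by positivity : 0 ≤ (H:ℝ)⁻¹)]
  refine mul_le_mul_of_nonneg_left ?_ (by positivity)
  rw [inv_mul_le_iff₀ hHr]
  refine (Finset.abs_sum_le_sum_abs _ _).trans ?_
  have : ∀ h ∈ Finset.range H, |∑ n ∈ Finset.Icc 1 N, a n - ∑ n ∈ Finset.Icc 1 N, a (n + h)| ≤ 2 * B * H :=
    fun h hh => (sum_shift a N h hB).trans (by
      have : (h:ℝ) ≤ H := by exact_mod_cast (Finset.mem_range.1 hh).le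
      gcongr)
  have := Finset.sum_le_sum this
  simpa using this

lemma cavg_bound (a F : ℕ → ℝ) (D : ℝ) (N : ℕ) (hN : 1 ≤ N)
    (h1 : |cavg a N - cavg F N| ≤ 1 / (N:ℝ) * D) :
    (cavg a N)^2 ≤ 2 * cavg (fun n => (F n)^2) N + (2 * D^2) * (1 / (N:ℝ)) := by
  have h2 := cavg_sq_le F N
  generalize cavg (fun n => (F n)^2) N = Q at *
  generalize cavg F N = P at *
  generalize cavg a N = R at *
  have h3 : (R - P)^2 ≤ (1 / (N:ℝ) * D)^2 := by
    rw [← sq_abs]; gcongr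
  have hN' : (1:ℝ) ≤ N := by exact_mod_cast hN
  have h4 : (1 / (N:ℝ))^2 ≤ 1 / (N:ℝ) := by
    have : 1 / (N:ℝ) ≤ 1 := by rw [div_le_one (by linarith)]; exact hN'
    have h0 : 0 ≤ 1 / (N:ℝ) := by positivity
    nlinarith
  have h5 : (1 / (N:ℝ) * D)^2 ≤ (1 / (N:ℝ)) * D^2 := by
    rw [mul_pow]; gcongr
  have h6 := sq_nonneg (R - 2 * P)
  have h7 : R^2 = 2 * P^2 + 2 * (R - P)^2 - (R - 2 * P)^2 := by ring
  linarith

lemma lavg_bound (a F : ℕ → ℝ) (D : ℝ)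
    (h1 : ∀ N, |cavg a N - cavg F N| ≤ 1 / (N:ℝ) * D) (M : ℕ) :
    lavg (fun N => (cavg a N)^2) M ≤
      2 * (2 * lavg (fun n => (F n)^2) M) + (2 * D^2) * lavg (fun n => 1 / (n:ℝ)) M := by
  refine (lavg_mono (fun N hN => cavg_bound a F D N hN (h1 N)) M).trans ?_
  rw [lavg_add, lavg_smul, lavg_smul]
  have := lavg_cavg_le (g := fun n => (F n)^2) (fun n => sq_nonneg _) M
  linarith

lemma lavg_cavg_sq {X : Type} [MetricSpace X] [CompactSpace X] [MeasurableSpace X] [BorelSpace X]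
    (T : X ≃ₜ X) (x : X) (ν : Measure X) [IsProbabilityMeasure ν]
    (hErg : Ergodic (⇑T) ν)
    (hlog : ∀ f : C(X, ℝ), Tendsto (lavg (fun n => f ((⇑T)^[n] x))) atTop (𝓝 (∫ y, f y ∂ν)))
    (f : C(X, ℝ)) (hf : ∫ y, f y ∂ν = 0) :
    Tendsto (lavg (fun N => (cavg (fun n => f ((⇑T)^[n] x)) N)^2)) atTop (𝓝 0) := by
  have hL : ∀ M, 0 ≤ lavg (fun N => (cavg (fun n => f ((⇑T)^[n] x)) N)^2) M :=
    lavg_nonneg fun n _ => sq_nonneg _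
  rw [Metric.tendsto_nhds]
  intro ε hε
  obtain ⟨H, hH, hH0⟩ := (((mean_erg T ν hErg f hf).eventually
    (gt_mem_nhds (show (0:ℝ) < ε / 8 by positivity))).and (eventually_gt_atTop 0)).exists
  have hFa : ∀ n, bavg T f H ((⇑T)^[n] x) = (H:ℝ)⁻¹ * ∑ h ∈ Finset.range H, f ((⇑T)^[n + h] x) := fun n => by
    rw [bavg_apply]
    congr 1
    refine Finset.sum_congr rfl fun h _ => ?_
    rw [← Function.iterate_add_apply, add_comm]
  have herr := cavg_err (fun n => f ((⇑T)^[n] x)) (B := ‖f‖) (fun n => f.norm_coe_le_norm _)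
    (norm_nonneg _) H hH0 (fun n => bavg T f H ((⇑T)^[n] x)) hFa
  have hbound := lavg_bound _ _ _ herr
  have hg2 := hlog ((bavg T f H)^2)
  simp only [ContinuousMap.pow_apply] at hg2
  have hlim := (((hg2.const_mul 2).const_mul 2)).add (lavg_inv.const_mul (2 * (2 * ‖f‖ * H)^2))
  have hlt : 2 * (2 * ∫ y, (bavg T f H y)^2 ∂ν) + (2 * (2 * ‖f‖ * H)^2) * 0 < ε := by linarith
  filter_upwards [hlim.eventually (gt_mem_nhds hlt)] with M hM
  rw [Real.dist_eq, sub_zero, abs_of_nonneg (hL M)]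
  exact (hbound M).trans_lt hM

lemma cavg_sub_const (u : ℕ → ℝ) (c : ℝ) {N : ℕ} (hN : 1 ≤ N) :
    cavg (fun n => u n - c) N = cavg u N - c := by
  have : (N:ℝ) ≠ 0 := by positivity
  unfold cavg
  rw [Finset.sum_sub_distrib]
  simp
  field_simp

lemma cavg_abs_sub_le {u v : ℕ → ℝ} {d : ℝ} (h : ∀ n, |u n - v n| ≤ d) {N : ℕ} (hN : 1 ≤ N) :
    |cavg u N - cavg v N| ≤ d := by
  have hN' : (0:ℝ) < N := by exact_mod_cast hN
  have : cavg u N - cavg v N = 1 / (N:ℝ) * ∑ n ∈ Finset.Icc 1 N, (u n - v n) := by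
    unfold cavg; rw [Finset.sum_sub_distrib]; ring
  rw [this, abs_mul, abs_of_nonneg (by positivity), one_div, inv_mul_le_iff₀ hN']
  refine (Finset.abs_sum_le_sum_abs _ _).trans ?_
  have := Finset.sum_le_sum (s := Finset.Icc 1 N) (fun n _ => h n)
  simpa using this

/-- If `x` is logarithmically generic for an ergodic `T`-invariant Borel probability
measure `ν` (i.e. the logarithmic empirical measures converge to `ν` in the weak-*
topology, expressed by testing against continuous functions), then there is a set
`A ⊆ ℕ` of logarithmic density `1` such that the (Cesàro) empirical measures converge
to `ν` along `N ∈ A`. -/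
theorem log_generic_ergodic_implies_generic_along_log_density_one
    {X : Type} [MetricSpace X] [CompactSpace X] [MeasurableSpace X] [BorelSpace X]
    (T : X ≃ₜ X) (x : X) (ν : Measure X) [IsProbabilityMeasure ν]
    (hErg : Ergodic (⇑T) ν)
    (hlog : ∀ f : C(X, ℝ),
      Tendsto
        (fun N : ℕ => (1 / Real.log N) *
          ∑ n ∈ Finset.Icc 1 N, f ((⇑T)^[n] x) / n)
        atTop (nhds (∫ y, f y ∂ν))) :
    ∃ A : Set ℕ,
      Tendsto
        (fun N : ℕ => (1 / Real.log N) *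
          ∑ n ∈ Finset.Icc 1 N, Set.indicator A (fun n : ℕ => (1 / n : ℝ)) n)
        atTop (nhds 1) ∧
      ∀ f : C(X, ℝ),
        Tendsto
          (fun N : ℕ => (1 / (N : ℝ)) * ∑ n ∈ Finset.Icc 1 N, f ((⇑T)^[n] x))
          (atTop ⊓ Filter.principal A) (nhds (∫ y, f y ∂ν)) := by
  have hlog' : ∀ f : C(X, ℝ), Tendsto (lavg (fun n => f ((⇑T)^[n] x))) atTop (𝓝 (∫ y, f y ∂ν)) := hlog
  have h1 : Tendsto (lavg (fun _ => 1)) atTop (𝓝 1) := by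
    simpa using hlog' 1
  have hint : ∀ f : C(X, ℝ), Integrable f ν := fun f =>
    f.continuous.integrable_of_hasCompactSupport (HasCompactSupport.of_compactSpace _)
  let fs : ℕ → C(X, ℝ) := TopologicalSpace.denseSeq C(X, ℝ)
  let f0 : C(X, ℝ) → C(X, ℝ) := fun f => f - ContinuousMap.const X (∫ y, f y ∂ν)
  have hf0 : ∀ f, ∫ y, f0 f y ∂ν = 0 := fun f => by
    have : ∫ y, (f y - ∫ z, f z ∂ν) ∂ν = 0 := by
      rw [integral_sub (hint f) (integrable_const _)]; simp
    exact this
  obtain ⟨A, hA, hA'⟩ := combine (s := fun k N => (cavg (fun n => f0 (fs k) ((⇑T)^[n] x)) N)^2)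
    (fun k n => sq_nonneg _) (fun k => lavg_cavg_sq T x ν hErg hlog' _ (hf0 _)) h1
  refine ⟨A, ?_, fun f => ?_⟩
  · refine hA.congr fun N => ?_
    unfold lavg
    congr 1
    refine Finset.sum_congr rfl fun n _ => ?_
    by_cases h : n ∈ A <;> simp [h]
  · change Tendsto (cavg (fun n => f ((⇑T)^[n] x))) _ _
    rw [Metric.tendsto_nhds]
    intro ε hε
    obtain ⟨k, hk⟩ := (TopologicalSpace.denseRange_denseSeq C(X, ℝ)).exists_dist_lt f
      (show 0 < ε / 3 by positivity)
    have hd : ∀ y, |f y - fs k y| ≤ ε / 3 := fun y => by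
      have := ContinuousMap.dist_apply_le_dist (f := f) (g := fs k) y
      rw [Real.dist_eq] at this
      exact this.trans hk.le
    have hdi : |∫ y, f y ∂ν - ∫ y, fs k y ∂ν| ≤ ε / 3 := by
      rw [← integral_sub (hint f) (hint _)]
      have := norm_integral_le_of_norm_le_const (μ := ν) (f := fun y => f y - fs k y)
        (Eventually.of_forall hd)
      simpa using this
    have hk2 := hA' k
    have hev := hk2.eventually (gt_mem_nhds (show (0:ℝ) < (ε / 3)^2 by positivity))
    have hge : ∀ᶠ N in atTop ⊓ 𝓟 A, 1 ≤ N := (eventually_ge_atTop 1).filter_mono inf_le_left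
    filter_upwards [hev, hge] with N hN hN1
    have e1 : cavg (fun n => f0 (fs k) ((⇑T)^[n] x)) N = cavg (fun n => fs k ((⇑T)^[n] x)) N - ∫ y, fs k y ∂ν :=
      cavg_sub_const _ _ hN1
    rw [e1] at hN
    have e2 := abs_lt_of_sq_lt_sq' hN (by positivity)
    have e3 := abs_le.1 (cavg_abs_sub_le (u := fun n => f ((⇑T)^[n] x)) (v := fun n => fs k ((⇑T)^[n] x))
      (fun n => hd _) hN1)
    have e4 := abs_le.1 hdi
    rw [Real.dist_eq, abs_lt]
    constructor <;> linarith [e2.1, e2.2, e3.1, e3.2, e4.1, e4.2]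
end

section
/- Fix an integer N ≥ 2 and let u : ℕ → ℝ be any bounded aperiodic sequence. Then for every ε > 0 there exists a subshift X ⊆ {0,1,...,N−1}^ℤ (a closed, shift-invariant subset, with the left shift S) whose topological entropy is greater than log N − ε, such that X is uncorrelated to u: lim_{M→∞} (1/M) Σ_{m≤M} f(S^m x) u(m) = 0 for every continuous f : X → ℂ and every x ∈ X. -/
open Filter Topology

/-- The left shift on a two-sided sequence space. -/
def shift {α : Type*} (x : ℤ → α) : ℤ → α := fun n => x (n + 1)


lemma exp_le_aux (l a x : ℝ) (ha : 0 < a) (hx : |x| ≤ a) :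
    Real.exp (l * x) ≤ Real.cosh (l * a) + x / a * Real.sinh (l * a) := by
  have h := abs_le.mp hx
  have hc := convexOn_exp.2 (Set.mem_univ (l * a)) (Set.mem_univ (-(l * a)))
    (show 0 ≤ (a + x) / (2 * a) by apply div_nonneg <;> linarith)
    (show 0 ≤ (a - x) / (2 * a) by apply div_nonneg <;> linarith)
    (by field_simp; ring)
  simp only [smul_eq_mul] at hc
  have e : (a + x) / (2 * a) * (l * a) + (a - x) / (2 * a) * -(l * a) = l * x := by
    field_simp; ring
  rw [e] at hc
  refine hc.trans (le_of_eq ?_)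
  rw [Real.cosh_eq, Real.sinh_eq]
  field_simp; ring

lemma conc {q : ℕ} (hq : 0 < q) {B : Type} [Fintype B] (X : Fin q → B → ℝ) (a : ℝ) (ha : 0 < a)
    (hX : ∀ i b, |X i b| ≤ a) (hm : ∀ i, ∑ b, X i b = 0) (s : ℝ) :
    (((Finset.univ.filter (fun c : Fin q → B => s ≤ ∑ i, X i (c i))).card : ℕ) : ℝ)
      ≤ (Fintype.card B : ℝ) ^ q * Real.exp (- (s ^ 2 / (2 * q * a ^ 2))) ∨ s < 0 := by
  rcases lt_or_ge s 0 with hs | hs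
  · exact Or.inr hs
  left
  have hq' : (0 : ℝ) < q := by exact_mod_cast hq
  set l : ℝ := s / (q * a ^ 2) with hl
  have hl0 : 0 ≤ l := by positivity
  have h1 : (((Finset.univ.filter (fun c : Fin q → B => s ≤ ∑ i, X i (c i))).card : ℕ) : ℝ)
      * Real.exp (l * s) ≤ ∑ c : Fin q → B, ∏ i, Real.exp (l * X i (c i)) := by
    rw [← nsmul_eq_mul, ← Finset.sum_const]
    refine (Finset.sum_le_sum (g := fun c : Fin q → B => ∏ i, Real.exp (l * X i (c i))) ?_).trans
      (Finset.sum_le_sum_of_subset_of_nonneg (Finset.filter_subset _ _) ?_)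
    · intro c hc
      rw [← Real.exp_sum, ← Finset.mul_sum]
      exact Real.exp_le_exp.mpr (mul_le_mul_of_nonneg_left (Finset.mem_filter.mp hc).2 hl0)
    · intro c _ _
      exact Finset.prod_nonneg fun i _ => (Real.exp_pos _).le
  have h2 : ∑ c : Fin q → B, ∏ i, Real.exp (l * X i (c i)) = ∏ i, ∑ b, Real.exp (l * X i b) := by
    rw [Finset.prod_univ_sum]; simp
  have h3 : ∀ i, ∑ b, Real.exp (l * X i b) ≤ Fintype.card B * Real.exp (l ^ 2 * a ^ 2 / 2) := by
    intro i
    calc ∑ b, Real.exp (l * X i b)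
        ≤ ∑ b, (Real.cosh (l * a) + X i b / a * Real.sinh (l * a)) :=
          Finset.sum_le_sum fun b _ => exp_le_aux l a _ ha (hX i b)
      _ = Fintype.card B * Real.cosh (l * a) := by
          rw [Finset.sum_add_distrib, ← Finset.sum_mul, ← Finset.sum_div, hm]
          simp
      _ ≤ _ := by
          gcongr
          have := Real.cosh_le_exp_half_sq (l * a)
          rwa [mul_pow] at this
  have h4 : ∏ i : Fin q, ∑ b, Real.exp (l * X i b)
      ≤ (Fintype.card B : ℝ) ^ q * Real.exp (q * (l ^ 2 * a ^ 2 / 2)) := by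
    refine (Finset.prod_le_prod (fun i _ => Finset.sum_nonneg fun b _ => (Real.exp_pos _).le)
      (fun i _ => h3 i)).trans (le_of_eq ?_)
    simp [mul_pow, Real.exp_nat_mul]
  have h5 := h1.trans (h2.le.trans h4)
  rw [← le_div_iff₀ (Real.exp_pos _), mul_div_assoc, ← Real.exp_sub] at h5
  refine h5.trans (le_of_eq ?_)
  congr 2
  rw [hl]; field_simp; ring

lemma conc2 {q : ℕ} (hq : 0 < q) {B : Type} [Fintype B] (X : Fin q → B → ℝ) (a : ℝ) (ha : 0 < a)
    (hX : ∀ i b, |X i b| ≤ a) (hm : ∀ i, ∑ b, X i b = 0) (s : ℝ) (hs : 0 ≤ s) :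
    (((Finset.univ.filter (fun c : Fin q → B => s < |∑ i, X i (c i)|)).card : ℕ) : ℝ)
      ≤ 2 * Real.exp (- (s ^ 2 / (2 * q * a ^ 2))) * (Fintype.card B : ℝ) ^ q := by
  classical
  have h1 := (conc hq X a ha hX hm s).resolve_right (not_lt.mpr hs)
  have h2 := (conc hq (fun i b => - X i b) a ha (by simpa using hX) (by simpa using hm) s).resolve_right
    (not_lt.mpr hs)
  have : (Finset.univ.filter (fun c : Fin q → B => s < |∑ i, X i (c i)|)) ⊆
    (Finset.univ.filter (fun c : Fin q → B => s ≤ ∑ i, X i (c i))) ∪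
    (Finset.univ.filter (fun c : Fin q → B => s ≤ ∑ i, -X i (c i))) := by
    intro c
    simp only [Finset.mem_filter, Finset.mem_univ, true_and, Finset.mem_union,
      Finset.sum_neg_distrib]
    intro h
    rcases lt_abs.mp h with h | h
    · exact Or.inl h.le
    · exact Or.inr h.le
  have h3 := (Finset.card_le_card this).trans (Finset.card_union_le _ _)
  have h4 : (((Finset.univ.filter (fun c : Fin q → B => s < |∑ i, X i (c i)|)).card : ℕ) : ℝ) ≤
      ((Finset.univ.filter (fun c : Fin q → B => s ≤ ∑ i, X i (c i))).card : ℝ) +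
      ((Finset.univ.filter (fun c : Fin q → B => s ≤ ∑ i, -X i (c i))).card : ℝ) := by
    exact_mod_cast h3
  linarith

/-- average over a large subset -/
lemma avg_sub {Ω : Type} [Fintype Ω] (S : Finset Ω) (hS : 0 < S.card) (g : Ω → ℝ)
    (hg : ∀ x, |g x| ≤ 1) (τ : ℝ)
    (h : ((Fintype.card Ω : ℝ) - S.card) ≤ τ * Fintype.card Ω) :
    |(∑ x ∈ S, g x) / S.card - (∑ x, g x) / Fintype.card Ω| ≤ 2 * τ := by
  classical
  have hS' : (0 : ℝ) < S.card := by exact_mod_cast hS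
  have hle : (S.card : ℝ) ≤ Fintype.card Ω := by exact_mod_cast Finset.card_le_univ S
  set n : ℝ := (Fintype.card Ω : ℝ)
  have hn : 0 < n := lt_of_lt_of_le hS' hle
  have hsplit : ∑ x, g x = ∑ x ∈ S, g x + ∑ x ∈ Sᶜ, g x := (Finset.sum_add_sum_compl S g).symm
  have hA : |∑ x ∈ S, g x| ≤ S.card := by
    refine (Finset.abs_sum_le_sum_abs _ _).trans ((Finset.sum_le_sum fun x _ => hg x).trans ?_)
    simp
  have hB : |∑ x ∈ Sᶜ, g x| ≤ n - S.card := by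
    refine (Finset.abs_sum_le_sum_abs _ _).trans ((Finset.sum_le_sum fun x _ => hg x).trans ?_)
    simp only [Finset.sum_const, Finset.card_compl, nsmul_eq_mul, mul_one]
    rw [Nat.cast_sub (Finset.card_le_univ S)]
  have e : (∑ x ∈ S, g x) / S.card - (∑ x, g x) / n
      = ((∑ x ∈ S, g x) / S.card * (n - S.card) - ∑ x ∈ Sᶜ, g x) / n := by
    rw [hsplit]; field_simp; ring
  have hA' : |(∑ x ∈ S, g x) / S.card| ≤ 1 := by
    rw [abs_div, abs_of_pos hS', div_le_one hS']; exact hA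
  rw [e, abs_div, abs_of_pos hn, div_le_iff₀ hn]
  calc _ ≤ |(∑ x ∈ S, g x) / S.card * (n - S.card)| + |∑ x ∈ Sᶜ, g x| := abs_sub _ _
    _ ≤ 1 * (n - S.card) + (n - S.card) := by
        rw [abs_mul, abs_of_nonneg (by linarith : 0 ≤ n - S.card)]
        gcongr
    _ ≤ _ := by linarith

/-- average of a one-coordinate function over the product -/
lemma avg_coord {q : ℕ} {B : Type} [Fintype B] [Nonempty B] (i : Fin q) (g : B → ℝ) :
    (∑ c : Fin q → B, g (c i)) / Fintype.card (Fin q → B) = (∑ b, g b) / Fintype.card B := by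
  classical
  have hB : (Fintype.card B : ℝ) ≠ 0 := by exact_mod_cast Fintype.card_ne_zero
  have h : ∑ c : Fin q → B, g (c i) = (∑ b, g b) * (Fintype.card B : ℝ) ^ (q - 1) := by
    have := Finset.prod_univ_sum (fun _ : Fin q => (Finset.univ : Finset B))
      (fun j b => if j = i then g b else 1)
    simp only [Fintype.piFinset_univ] at this
    have e : ∀ c : Fin q → B, (∏ j, if j = i then g (c j) else 1) = g (c i) := by
      intro c; simp
    simp only [e] at this
    rw [← this, ← Finset.mul_prod_erase _ _ (Finset.mem_univ i)]
    congr 1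
    · simp
    · rw [Finset.prod_congr rfl (g := fun _ => (Fintype.card B : ℝ))]
      · simp
      · intro j hj; simp [(Finset.mem_erase.mp hj).1]
  have hq : q = (q - 1) + 1 := by have := i.2; omega
  rw [h, Fintype.card_fun, Fintype.card_fin]
  rw [div_eq_div_iff (by positivity) hB]
  push_cast
  conv_rhs => rw [hq, pow_succ]
  ring


structure Lvl (A : Type) where
  n : ℕ
  hn : 0 < n
  B : Type
  ft : Fintype B
  ne : Nonempty B
  rd : B → ℕ → A
  inj : ∀ b b', (∀ m < n, rd b m = rd b' m) → b = b'

attribute [instance] Lvl.ft Lvl.ne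

structure Tst (A : Type) where
  r : ℕ
  φ : (ℕ → A) → ℝ
  bd : ∀ y, |φ y| ≤ 1
  loc : ∀ y y', (∀ i < r, y i = y' i) → φ y = φ y'

open Classical in
noncomputable def GG {A : Type} (L : Lvl A) (T : Tst A) (b : L.B) (m : ℕ) : ℝ :=
  if m + T.r ≤ L.n then T.φ (fun i => L.rd b (m + i)) else 0

noncomputable def pp {A : Type} (L : Lvl A) (T : Tst A) (m : ℕ) : ℝ :=
  (∑ b, GG L T b m) / Fintype.card L.B

lemma GG_bd {A : Type} (L : Lvl A) (T : Tst A) (b : L.B) (m : ℕ) : |GG L T b m| ≤ 1 := by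
  unfold GG; split_ifs
  · exact T.bd _
  · simp

lemma card_pos' {A : Type} (L : Lvl A) : (0 : ℝ) < Fintype.card L.B := by
  exact_mod_cast Fintype.card_pos

lemma pp_bd {A : Type} (L : Lvl A) (T : Tst A) (m : ℕ) : |pp L T m| ≤ 1 := by
  unfold pp
  rw [abs_div, abs_of_pos (card_pos' L), div_le_one (card_pos' L)]
  refine (Finset.abs_sum_le_sum_abs _ _).trans ((Finset.sum_le_sum fun x _ => GG_bd L T x m).trans ?_)
  simp

structure Step {A : Type} (u : ℕ → ℝ) (tst : ℕ → Tst A) (k q tm : ℕ) (δ τ : ℝ) (L L' : Lvl A) :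
    Prop where
  hn : L'.n = q * L.n
  dec : ∀ b' : L'.B, ∃ c : ℕ → L.B,
    (∀ i < q, ∀ m < L.n, L'.rd b' (i * L.n + m) = L.rd (c i) m) ∧
    ∀ j ≤ k, ∀ t ≤ tm, |∑ i ∈ Finset.range q, ∑ m ∈ Finset.range L.n,
      (GG L (tst j) (c i) m - pp L (tst j) m) * u (t + (i * L.n + m))| ≤ δ * (q * L.n)
  drift : ∀ T : Tst A, ∀ i < q, ∀ m, m < L.n → m + T.r ≤ L.n →
    |pp L' T (i * L.n + m) - pp L T m| ≤ 2 * τ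
  card : (Fintype.card L.B) ^ q ≤ 2 * Fintype.card L'.B

lemma exists_step {A : Type} (u : ℕ → ℝ) (C : ℝ) (hC : 0 < C) (hu : ∀ n, |u n| ≤ C)
    (tst : ℕ → Tst A) (k q tm : ℕ) (hq : 0 < q) (δ τ : ℝ) (hδ : 0 ≤ δ) (hτ : τ ≤ 1 / 2)
    (hb : (k + 1) * (tm + 1) * (2 * Real.exp (-(δ ^ 2 * q / (8 * C ^ 2)))) ≤ τ)
    (L : Lvl A) : ∃ L', Step u tst k q tm δ τ L L' := by
  classical
  have hn0 : (0 : ℝ) < L.n := by exact_mod_cast L.hn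
  have hq0 : (0 : ℝ) < q := by exact_mod_cast hq
  let Y : ℕ → ℕ → ℕ → L.B → ℝ := fun j t i b => ∑ m ∈ Finset.range L.n,
      (GG L (tst j) b m - pp L (tst j) m) * u (t + (i * L.n + m))
  have hY : ∀ j t i b, |Y j t i b| ≤ 2 * C * L.n := by
    intro j t i b
    refine (Finset.abs_sum_le_sum_abs _ _).trans
      ((Finset.sum_le_sum (g := fun _ => 2 * C) fun m _ => ?_).trans ?_)
    · rw [abs_mul]
      have := GG_bd L (tst j) b m
      have := pp_bd L (tst j) m
      gcongr
      · exact (abs_sub _ _).trans (by linarith)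
      · exact hu _
    · simp; linarith
  have hY0 : ∀ j t i, ∑ b, Y j t i b = 0 := by
    intro j t i
    simp only [Y]
    rw [Finset.sum_comm]
    refine Finset.sum_eq_zero fun m _ => ?_
    rw [← Finset.sum_mul, Finset.sum_sub_distrib]
    have := (card_pos' L).ne'
    simp only [Finset.sum_const, nsmul_eq_mul, pp, Finset.card_univ]
    field_simp
    simp
  let bad : ℕ → ℕ → Finset (Fin q → L.B) := fun j t =>
    Finset.univ.filter (fun c => δ * (q * L.n) < |∑ i : Fin q, Y j t i (c i)|)
  have hbad : ∀ j t, ((bad j t).card : ℝ) ≤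
      2 * Real.exp (-(δ ^ 2 * q / (8 * C ^ 2))) * (Fintype.card L.B : ℝ) ^ q := by
    intro j t
    have := conc2 hq (fun i : Fin q => Y j t i) (2 * C * L.n) (by positivity)
      (fun i b => hY j t i b) (fun i => hY0 j t i) (δ * (q * L.n)) (by positivity)
    refine this.trans (le_of_eq ?_)
    congr 4
    field_simp; ring
  let allbad : Finset (Fin q → L.B) :=
    (Finset.range (k + 1)).biUnion fun j => (Finset.range (tm + 1)).biUnion fun t => bad j t
  let S : Finset (Fin q → L.B) := allbadᶜ
  have hS : ∀ c ∈ S, ∀ j ≤ k, ∀ t ≤ tm, |∑ i : Fin q, Y j t i (c i)| ≤ δ * (q * L.n) := by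
    intro c hc j hj t ht
    by_contra hcon
    apply Finset.mem_compl.mp hc
    simp only [allbad, Finset.mem_biUnion, Finset.mem_range, bad, Finset.mem_filter,
      Finset.mem_univ, true_and]
    exact ⟨j, by omega, t, by omega, not_le.mp hcon⟩
  have hcardfun : (Fintype.card (Fin q → L.B) : ℝ) = (Fintype.card L.B : ℝ) ^ q := by simp
  have hQ : (0 : ℝ) < (Fintype.card L.B : ℝ) ^ q := pow_pos (card_pos' L) q
  have hallbad : (allbad.card : ℝ) ≤ τ * Fintype.card (Fin q → L.B) := by
    have h1 : (allbad.card : ℝ) ≤ ∑ j ∈ Finset.range (k + 1), ∑ t ∈ Finset.range (tm + 1),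
        ((bad j t).card : ℝ) := by
      have : allbad.card ≤ ∑ j ∈ Finset.range (k + 1), ∑ t ∈ Finset.range (tm + 1),
        (bad j t).card :=
        Finset.card_biUnion_le.trans (Finset.sum_le_sum fun j _ => Finset.card_biUnion_le)
      exact_mod_cast this
    refine h1.trans ((Finset.sum_le_sum fun j _ => Finset.sum_le_sum fun t _ => hbad j t).trans ?_)
    rw [hcardfun]
    simp only [Finset.sum_const, Finset.card_range, nsmul_eq_mul]
    push_cast
    calc _ = ((k + 1) * (tm + 1) * (2 * Real.exp (-(δ ^ 2 * q / (8 * C ^ 2))))) *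
          (Fintype.card L.B : ℝ) ^ q := by ring
      _ ≤ _ := by gcongr
  have hScard : (Fintype.card (Fin q → L.B) : ℝ) - S.card = allbad.card := by
    have : S.card = Fintype.card (Fin q → L.B) - allbad.card := Finset.card_compl _
    rw [this, Nat.cast_sub (Finset.card_le_univ _)]; ring
  have hSτ : (Fintype.card (Fin q → L.B) : ℝ) - S.card ≤ τ * Fintype.card (Fin q → L.B) := by
    rw [hScard]; exact hallbad
  have hShalf : (Fintype.card L.B : ℝ) ^ q ≤ 2 * S.card := by
    rw [hcardfun] at hSτ
    nlinarith
  have hSpos : 0 < S.card := by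
    have : (0 : ℝ) < S.card := by linarith
    exact_mod_cast this
  have hlt : ∀ m, m < q * L.n → m / L.n < q := fun m hm => Nat.div_lt_of_lt_mul (by rwa [mul_comm])
  have hdm : ∀ i m, m < L.n → (i * L.n + m) / L.n = i ∧ (i * L.n + m) % L.n = m := by
    intro i m hm
    constructor
    · rw [mul_comm, Nat.mul_add_div L.hn, Nat.div_eq_of_lt hm, add_zero]
    · rw [mul_comm, Nat.mul_add_mod, Nat.mod_eq_of_lt hm]
  have hlt2 : ∀ i m, i < q → m < L.n → i * L.n + m < q * L.n := by
    intro i m hi hm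
    nlinarith
  let ext : (Fin q → L.B) → ℕ → L.B := fun c i => c ⟨i % q, Nat.mod_lt _ hq⟩
  have hext : ∀ (c : Fin q → L.B) (i : Fin q), ext c i = c i := by
    intro c i; simp only [ext]; congr 1; ext; simp [Nat.mod_eq_of_lt i.2]
  obtain ⟨c0, hc0⟩ := Finset.card_pos.mp hSpos
  let L' : Lvl A :=
    { n := q * L.n
      hn := Nat.mul_pos hq L.hn
      B := {c // c ∈ S}
      ft := inferInstance
      ne := ⟨⟨c0, hc0⟩⟩
      rd := fun c m => L.rd (ext c.1 (m / L.n)) (m % L.n)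
      inj := by
        intro b b' h
        apply Subtype.ext
        funext i
        apply L.inj
        intro m hm
        have := h (i * L.n + m) (hlt2 _ _ i.2 hm)
        rw [(hdm i m hm).1, (hdm i m hm).2, hext, hext] at this
        exact this }
  have hrd : ∀ (c : L'.B) (i m : ℕ), m < L.n → L'.rd c (i * L.n + m) = L.rd (ext c.1 i) m := by
    intro c i m hm
    show L.rd (ext c.1 _) _ = _
    rw [(hdm i m hm).1, (hdm i m hm).2]
  have hcL' : Fintype.card L'.B = S.card := Fintype.card_coe S
  refine ⟨L', rfl, ?_, ?_, ?_⟩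
  · intro b'
    refine ⟨ext b'.1, fun i _ m hm => hrd b' i m hm, ?_⟩
    intro j hj t ht
    have := hS b'.1 b'.2 j hj t ht
    rw [Finset.sum_range]
    simpa only [hext, Y] using this
  · intro T i hi m hm hmr
    have e1 : pp L' T (i * L.n + m) =
        (∑ c ∈ S, GG L T (c ⟨i, hi⟩) m) / S.card := by
      unfold pp
      rw [hcL']
      congr 1
      rw [← Finset.sum_coe_sort S]
      refine Finset.sum_congr rfl fun c _ => ?_
      have hle : i * L.n + m + T.r ≤ L'.n := by
        show _ ≤ q * L.n
        have : (i + 1) * L.n ≤ q * L.n := Nat.mul_le_mul_right _ hi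
        linarith
      unfold GG
      rw [if_pos hle, if_pos hmr]
      apply T.loc
      intro l hl
      rw [add_assoc, hrd c i (m + l) (by omega)]
      congr 1
      exact hext c.1 ⟨i, hi⟩
    have e2 : pp L T m = (∑ c : Fin q → L.B, GG L T (c ⟨i, hi⟩) m) /
        Fintype.card (Fin q → L.B) := by
      rw [avg_coord ⟨i, hi⟩ (fun b => GG L T b m)]; rfl
    rw [e1, e2]
    exact avg_sub S hSpos _ (fun c => GG_bd L T _ m) τ hSτ
  · rw [hcL']
    exact_mod_cast hShalf


def nn (q : ℕ → ℕ) (k : ℕ) : ℕ := ∏ l ∈ Finset.range k, q l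

lemma params (c : ℝ) (hc : 0 < c) (K : ℕ) : ∃ q : ℕ → ℕ, (∀ k, K ≤ q k) ∧ (∀ k, k ≤ q k) ∧
    (∀ k, 2 ≤ q k) ∧
    ∀ k : ℕ, ((k : ℝ) + 1) * ((nn q (k + 3) : ℕ) + 1) *
      (2 * Real.exp (-((1 / ((k : ℝ) + 1)) ^ 2 * q k * c))) ≤ (1 / 2) ^ (k + 1) := by
  have h1 : ∀ᶠ s : ℕ in atTop, 20 * (s : ℝ) ^ 4 ≤ c * 2 ^ s := by
    have := tendsto_pow_const_div_const_pow_of_one_lt 4 (show (1 : ℝ) < 2 by norm_num)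
    have h2 := this.eventually (gt_mem_nhds (show (0 : ℝ) < c / 20 by positivity))
    filter_upwards [h2] with s hs
    rw [div_lt_iff₀ (by positivity)] at hs
    linarith
  obtain ⟨s0, hs0⟩ := eventually_atTop.mp h1
  set a := s0 + K + 1 with ha
  have hlt : ∀ m : ℕ, m < 2 ^ m := fun m => Nat.lt_two_pow_self
  refine ⟨fun k => 2 ^ (k + a), ?_, ?_, ?_, ?_⟩
  · intro k; have := hlt (k + a); show K ≤ 2 ^ (k + a); omega
  · intro k; have := hlt (k + a); show k ≤ 2 ^ (k + a); omega
  · intro k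
    calc 2 = 2 ^ 1 := rfl
      _ ≤ 2 ^ (k + a) := Nat.pow_le_pow_right (by norm_num) (by omega)
  intro k
  set s := k + a with hs
  have hnn : nn (fun k => 2 ^ (k + a)) (k + 3) ≤ 2 ^ ((s + 3) * (s + 3)) := by
    unfold nn
    rw [Finset.prod_pow_eq_pow_sum]
    apply Nat.pow_le_pow_right (by norm_num)
    calc ∑ i ∈ Finset.range (k + 3), (i + a) ≤ ∑ i ∈ Finset.range (k + 3), (s + 3) :=
          Finset.sum_le_sum fun i hi => by have := Finset.mem_range.mp hi; omega
      _ = (k + 3) * (s + 3) := by simp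
      _ ≤ _ := Nat.mul_le_mul_right _ (by omega)
  have hnn' : ((nn (fun k => 2 ^ (k + a)) (k + 3) : ℕ) : ℝ) + 1 ≤ 2 ^ ((s + 3) * (s + 3) + 1) := by
    have h3 : ((nn (fun k => 2 ^ (k + a)) (k + 3) : ℕ) : ℝ) ≤ 2 ^ ((s + 3) * (s + 3)) := by
      exact_mod_cast hnn
    have : (1 : ℝ) ≤ 2 ^ ((s + 3) * (s + 3)) := one_le_pow₀ (by norm_num)
    rw [pow_succ]; linarith
  have hk : (k : ℝ) + 1 ≤ s := by
    have : k + 1 ≤ s := by omega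
    exact_mod_cast this
  have hk2 : (k : ℝ) + 1 ≤ 2 ^ s := by
    have := hlt s
    have : k + 1 ≤ 2 ^ s := by omega
    exact_mod_cast this
  have hspos : (0 : ℝ) < s := by have : (0 : ℝ) ≤ k := by positivity
                                 linarith
  have hexp : Real.exp (-((1 / ((k : ℝ) + 1)) ^ 2 * ((2 ^ s : ℕ) : ℝ) * c)) ≤ Real.exp (-(20 * s ^ 2)) := by
    apply Real.exp_le_exp.mpr
    have h4 := hs0 s (by omega)
    have h5 : (1 / (s : ℝ)) ^ 2 ≤ (1 / ((k : ℝ) + 1)) ^ 2 := by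
      gcongr
    have h6 : 20 * (s : ℝ) ^ 2 ≤ (1 / (s : ℝ)) ^ 2 * (2 ^ s * c) := by
      rw [div_pow, one_pow, div_mul_eq_mul_div, le_div_iff₀ (by positivity)]
      nlinarith
    have h7 : (1 / (s : ℝ)) ^ 2 * (2 ^ s * c) ≤ (1 / ((k : ℝ) + 1)) ^ 2 * (2 ^ s * c) := by
      gcongr
    push_cast
    linarith
  have h8 : (2 : ℝ) ^ (20 * s ^ 2) * Real.exp (-(20 * s ^ 2)) ≤ 1 := by
    have h9 : (2 : ℝ) ^ (20 * s ^ 2) ≤ Real.exp (20 * s ^ 2) := by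
      have : (2 : ℝ) ≤ Real.exp 1 := by have := Real.add_one_le_exp 1; linarith
      calc (2 : ℝ) ^ (20 * s ^ 2) ≤ Real.exp 1 ^ (20 * s ^ 2) := by gcongr
        _ = _ := by rw [← Real.exp_nat_mul]; push_cast; ring_nf
    rw [Real.exp_neg, ← div_eq_mul_inv, div_le_one (Real.exp_pos _)]
    exact h9
  have h10 : (2 : ℝ) ^ s * 2 ^ ((s + 3) * (s + 3) + 1) * 2 * 2 ^ (k + 1) ≤ 2 ^ (20 * s ^ 2) := by
    have : (2 : ℝ) ^ s * 2 ^ ((s + 3) * (s + 3) + 1) * 2 * 2 ^ (k + 1)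
      = 2 ^ (s + ((s + 3) * (s + 3) + 1) + 1 + (k + 1)) := by ring
    rw [this]
    apply pow_le_pow_right₀ (by norm_num)
    have : 1 ≤ s := by omega
    have : k + 1 ≤ s := by omega
    nlinarith
  rw [show ((1 : ℝ) / 2) ^ (k + 1) = 1 / 2 ^ (k + 1) from one_div_pow _ _, le_div_iff₀ (by positivity)]
  calc _ ≤ (2 : ℝ) ^ s * 2 ^ ((s + 3) * (s + 3) + 1) * (2 * Real.exp (-(20 * s ^ 2))) * 2 ^ (k + 1) := by
        gcongr
    _ = ((2 : ℝ) ^ s * 2 ^ ((s + 3) * (s + 3) + 1) * 2 * 2 ^ (k + 1)) * Real.exp (-(20 * s ^ 2)) := by ring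
    _ ≤ 2 ^ (20 * s ^ 2) * Real.exp (-(20 * s ^ 2)) := by gcongr
    _ ≤ 1 := h8

def lvl0 (A : Type) [Fintype A] [Nonempty A] : Lvl A where
  n := 1
  hn := one_pos
  B := A
  ft := inferInstance
  ne := inferInstance
  rd := fun a _ => a
  inj := fun _ _ h => h 0 one_pos

/-- the sequence of levels -/
lemma exists_levels {A : Type} [Fintype A] [Nonempty A] (u : ℕ → ℝ) (C : ℝ) (hC : 0 < C)
    (hu : ∀ n, |u n| ≤ C) (tst : ℕ → Tst A) (ε : ℝ) (hε : 0 < ε) :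
    ∃ (q : ℕ → ℕ) (L : ℕ → Lvl A), (∀ k, k ≤ q k) ∧ (∀ k, 2 ≤ q k) ∧ (∀ k, (L k).n = nn q k) ∧
      (∀ k, Step u tst k (q k) (nn q (k + 3)) (1 / ((k : ℝ) + 1)) ((1 / 2) ^ (k + 1)) (L k) (L (k + 1))) ∧
      ∀ k : ℕ, (nn q k : ℝ) * (Real.log (Fintype.card A) - ε) ≤ Real.log (Fintype.card (L k).B) := by
  obtain ⟨K, hK⟩ := exists_nat_ge (Real.log 2 / ε + 1)
  obtain ⟨q, hqK, hqk, hq2, hq⟩ := params (1 / (8 * C ^ 2)) (by positivity) K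
  have hst : ∀ (k : ℕ) (L : Lvl A), ∃ L', Step u tst k (q k) (nn q (k + 3)) (1 / ((k : ℝ) + 1))
      ((1 / 2) ^ (k + 1)) L L' := by
    intro k L
    refine exists_step u C hC hu tst k (q k) _ (by have := hq2 k; omega) _ _ (by positivity) ?_ ?_ L
    · rw [pow_succ]
      have : ((1 : ℝ) / 2) ^ k ≤ 1 := pow_le_one₀ (by norm_num) (by norm_num)
      linarith
    · refine le_trans (le_of_eq ?_) (hq k)
      congr 4
      ring
  choose nxt hnxt using hst
  obtain ⟨L, hL0, hLs⟩ : ∃ L : ℕ → Lvl A, L 0 = lvl0 A ∧ ∀ k, L (k + 1) = nxt k (L k) :=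
    ⟨fun k => Nat.rec (motive := fun _ => Lvl A) (lvl0 A) (fun k L => nxt k L) k, rfl, fun _ => rfl⟩
  have hL : ∀ k, Step u tst k (q k) (nn q (k + 3)) (1 / ((k : ℝ) + 1)) ((1 / 2) ^ (k + 1)) (L k) (L (k + 1)) :=
    fun k => hLs k ▸ hnxt k (L k)
  have hn : ∀ k, (L k).n = nn q k := by
    intro k
    induction k with
    | zero => rw [hL0]; simp [nn, lvl0]
    | succ k ih => rw [(hL k).hn, ih]; simp [nn, Finset.prod_range_succ, mul_comm]
  refine ⟨q, L, hqk, hq2, hn, hL, ?_⟩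
  have key : ∀ k : ℕ, (nn q k : ℝ) * (Real.log (Fintype.card A) - ε) + ε ≤
      Real.log (Fintype.card (L k).B) := by
    intro k
    induction k with
    | zero =>
      have : Fintype.card (L 0).B = Fintype.card A := by rw [hL0]; rfl
      rw [this]; simp [nn]
    | succ k ih =>
      have h1 : ((Fintype.card (L k).B : ℝ)) ^ (q k) ≤ 2 * Fintype.card (L (k+1)).B := by
        exact_mod_cast (hL k).card
      have h2 := Real.log_le_log (pow_pos (card_pos' (L k)) _) h1
      rw [Real.log_pow, Real.log_mul (by norm_num) (card_pos' (L (k+1))).ne'] at h2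
      have h3 : (nn q (k+1) : ℝ) = nn q k * q k := by
        simp [nn, Finset.prod_range_succ]
      have h4 : (K : ℝ) ≤ q k := by exact_mod_cast hqK k
      have h5 : Real.log 2 ≤ ε * (q k - 1) := by
        have : Real.log 2 / ε ≤ q k - 1 := by linarith
        rw [div_le_iff₀ hε] at this
        linarith
      have h6 : (q k : ℝ) * ((nn q k : ℝ) * (Real.log (Fintype.card A) - ε) + ε) ≤
        q k * Real.log (Fintype.card (L k).B) := by gcongr
      rw [h3]
      nlinarith
  intro k
  linarith [key k]


lemma sum_range_mul' (f : ℕ → ℝ) (q n : ℕ) :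
    ∑ m ∈ Finset.range (q * n), f m = ∑ i ∈ Finset.range q, ∑ m ∈ Finset.range n, f (i * n + m) := by
  induction q with
  | zero => simp
  | succ q ih => rw [add_mul, one_mul, Finset.sum_range_add, ih, Finset.sum_range_succ]

lemma abs_sum_Ico_le (h : ℕ → ℝ) (H : ℝ) (hh : ∀ m, |h m| ≤ H) (a b : ℕ) :
    |∑ m ∈ Finset.Ico a b, h m| ≤ H * ((b - a : ℕ) : ℝ) := by
  refine (Finset.abs_sum_le_sum_abs _ _).trans ((Finset.sum_le_sum fun m _ => hh m).trans ?_)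
  simp [mul_comm]

lemma sum_windows (h : ℕ → ℝ) (H : ℝ) (hh : ∀ m, |h m| ≤ H) (n t0 M : ℕ) (hn : 0 < n)
    (h1 : 1 ≤ t0) (h2 : t0 ≤ n) (η : ℝ) (hη : 0 ≤ η)
    (hw : ∀ i, t0 + i * n ≤ M → |∑ m ∈ Finset.range n, h (t0 + i * n + m)| ≤ η * n) :
    |∑ m ∈ Finset.Icc 1 M, h m| ≤ η * M + 2 * H * n := by
  have hH : 0 ≤ H := (abs_nonneg _).trans (hh 0)
  have e0 : Finset.Icc 1 M = Finset.Ico 1 (M + 1) := by ext; simp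
  rw [e0]
  rcases lt_or_ge M t0 with hM | hM
  · refine (abs_sum_Ico_le h H hh _ _).trans ?_
    have : ((M + 1 - 1 : ℕ) : ℝ) ≤ n := by
      have : M + 1 - 1 ≤ n := by omega
      exact_mod_cast this
    have h3 : H * ((M + 1 - 1 : ℕ) : ℝ) ≤ H * n := by gcongr
    have h4 : 0 ≤ η * M := by positivity
    have h5 : 0 ≤ H * n := by positivity
    linarith
  set D := (M + 1 - t0) / n with hD
  have hDn : D * n ≤ M + 1 - t0 := Nat.div_mul_le_self _ _
  have hDn2 : M + 1 - t0 < D * n + n := by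
    have := Nat.lt_div_mul_add (a := M + 1 - t0) hn
    exact this
  have s1 := Finset.sum_Ico_consecutive h (show 1 ≤ t0 from h1) (show t0 ≤ t0 + D * n by omega)
  have s2 := Finset.sum_Ico_consecutive h (show 1 ≤ t0 + D * n by omega)
    (show t0 + D * n ≤ M + 1 by omega)
  have s3 : ∑ m ∈ Finset.Ico t0 (t0 + D * n), h m = ∑ i ∈ Finset.range D,
      ∑ m ∈ Finset.range n, h (t0 + i * n + m) := by
    rw [Finset.sum_Ico_eq_sum_range]
    simp only [add_tsub_cancel_left]
    rw [sum_range_mul' (fun m => h (t0 + m))]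
    simp only [add_assoc]
  have b3 : |∑ m ∈ Finset.Ico t0 (t0 + D * n), h m| ≤ η * M := by
    rw [s3]
    refine (Finset.abs_sum_le_sum_abs _ _).trans
      ((Finset.sum_le_sum (g := fun _ => η * n) fun i hi => hw i ?_).trans ?_)
    · have hi := Finset.mem_range.mp hi
      have : (i + 1) * n ≤ D * n := Nat.mul_le_mul_right _ hi
      rw [add_mul] at this
      omega
    · simp only [Finset.sum_const, Finset.card_range, nsmul_eq_mul]
      have : ((D * n : ℕ) : ℝ) ≤ M := by
        have : D * n ≤ M := by omega
        exact_mod_cast this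
      push_cast at this
      calc _ = η * (D * n) := by ring
        _ ≤ _ := by gcongr
  have b1 := abs_sum_Ico_le h H hh 1 t0
  have b2 := abs_sum_Ico_le h H hh (t0 + D * n) (M + 1)
  have c1 : H * ((t0 - 1 : ℕ) : ℝ) ≤ H * n := by
    have : ((t0 - 1 : ℕ) : ℝ) ≤ n := by exact_mod_cast (show t0 - 1 ≤ n by omega)
    gcongr
  have c2 : H * ((M + 1 - (t0 + D * n) : ℕ) : ℝ) ≤ H * n := by
    have : ((M + 1 - (t0 + D * n) : ℕ) : ℝ) ≤ n := by
      exact_mod_cast (show M + 1 - (t0 + D * n) ≤ n by omega)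
    gcongr
  rw [← s2, ← s1]
  refine (abs_add_le _ _).trans ?_
  have := abs_add_le (∑ m ∈ Finset.Ico 1 t0, h m) (∑ m ∈ Finset.Ico t0 (t0 + D * n), h m)
  linarith

lemma periodic_corr (u : ℕ → ℝ) (C : ℝ) (hu : ∀ n, |u n| ≤ C)
    (haper : ∀ a b : ℕ, 1 ≤ a →
      Tendsto (fun M : ℕ => (1 / (M : ℝ)) * ∑ m ∈ Finset.Icc 1 M, u (a * m + b))
        atTop (nhds 0)) (d : ℕ) (hd : 0 < d) (σ : ℕ) (P : ℕ → ℝ) (hP : ∀ m, |P m| ≤ 1) :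
    Tendsto (fun M : ℕ => (1 / (M : ℝ)) * ∑ m ∈ Finset.Icc 1 M, P ((m + σ) % d) * u m)
      atTop (nhds 0) := by
  have hC : 0 ≤ C := (abs_nonneg _).trans (hu 0)
  set h : ℕ → ℝ := fun m => P ((m + σ) % d) * u m with hh
  have hb : ∀ m, |h m| ≤ C := by
    intro m
    rw [hh, abs_mul]
    calc _ ≤ 1 * C := by gcongr; exacts [hP _, hu _]
      _ = C := one_mul C
  have hDt : Tendsto (fun M : ℕ => M / d) atTop atTop := Nat.tendsto_div_const_atTop hd.ne'
  have hlim : Tendsto (fun M : ℕ => (∑ b ∈ Finset.range d,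
      |(1 / ((M / d : ℕ) : ℝ)) * ∑ m ∈ Finset.Icc 1 (M / d), u (d * m + b)|) + 2 * C * d * (1 / (M : ℝ)))
      atTop (nhds 0) := by
    have h1 : Tendsto (fun M : ℕ => ∑ b ∈ Finset.range d,
      |(1 / ((M / d : ℕ) : ℝ)) * ∑ m ∈ Finset.Icc 1 (M / d), u (d * m + b)|) atTop
      (nhds (∑ b ∈ Finset.range d, (0 : ℝ))) := by
      refine tendsto_finsetSum _ fun b _ => ?_
      have := ((haper d b hd).comp hDt).abs
      simpa using this
    have h2 : Tendsto (fun M : ℕ => 2 * C * d * (1 / (M : ℝ))) atTop (nhds (2 * C * d * 0)) :=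
      tendsto_one_div_atTop_nhds_zero_nat.const_mul _
    simpa using h1.add h2
  refine squeeze_zero_norm (fun M => ?_) hlim
  rw [Real.norm_eq_abs, abs_mul, abs_of_nonneg (by positivity : (0 : ℝ) ≤ 1 / M)]
  set D := M / d with hD
  have hDM : D ≤ M := Nat.div_le_self _ _
  have hM1 : M + 1 ≤ d + D * d := by
    have := Nat.lt_div_mul_add (a := M) hd
    rw [← hD] at this
    omega
  have hM2 : D * d ≤ M := Nat.div_mul_le_self _ _
  rcases Nat.eq_zero_or_pos M with hM0 | hM0
  · subst hM0; simp [hD]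
  have e0 : Finset.Icc 1 M = Finset.Ico 1 (M + 1) := by ext; simp
  rw [e0]
  have s1 := Finset.sum_Ico_consecutive h (show 1 ≤ d from hd) (show d ≤ d + D * d by omega)
  have s2 := Finset.sum_Ico_consecutive h (show 1 ≤ M + 1 by omega) hM1
  have s3 : ∑ m ∈ Finset.Ico d (d + D * d), h m = ∑ b ∈ Finset.range d,
      P ((b + σ) % d) * ∑ m ∈ Finset.Icc 1 D, u (d * m + b) := by
    rw [Finset.sum_Ico_eq_sum_range]
    simp only [add_tsub_cancel_left]
    rw [sum_range_mul' (fun m => h (d + m)), Finset.sum_comm]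
    refine Finset.sum_congr rfl fun b _ => ?_
    have e1 : Finset.Icc 1 D = Finset.Ico (0 + 1) (D + 1) := by ext; simp
    rw [e1, ← Finset.sum_Ico_add' (fun m => u (d * m + b)), ← Finset.range_eq_Ico, Finset.mul_sum]
    refine Finset.sum_congr rfl fun i _ => ?_
    have e2 : d + (i * d + b) = d * (i + 1) + b := by ring
    simp only [hh, e2]
    congr 2
    rw [add_assoc, Nat.mul_add_mod]
  have b3 : |∑ m ∈ Finset.Ico d (d + D * d), h m| ≤ ∑ b ∈ Finset.range d,
      |∑ m ∈ Finset.Icc 1 D, u (d * m + b)| := by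
    rw [s3]
    refine (Finset.abs_sum_le_sum_abs _ _).trans (Finset.sum_le_sum fun b _ => ?_)
    rw [abs_mul]
    exact mul_le_of_le_one_left (abs_nonneg _) (hP _)
  have b1 := abs_sum_Ico_le h C hb 1 d
  have b2 := abs_sum_Ico_le h C hb (M + 1) (d + D * d)
  have c1 : C * ((d - 1 : ℕ) : ℝ) ≤ C * d := by
    have : ((d - 1 : ℕ) : ℝ) ≤ d := by exact_mod_cast (show d - 1 ≤ d by omega)
    gcongr
  have c2 : C * ((d + D * d - (M + 1) : ℕ) : ℝ) ≤ C * d := by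
    have : ((d + D * d - (M + 1) : ℕ) : ℝ) ≤ d := by
      exact_mod_cast (show d + D * d - (M + 1) ≤ d by omega)
    gcongr
  have e4 : ∑ m ∈ Finset.Ico 1 (M + 1), h m = ∑ m ∈ Finset.Ico 1 d, h m +
    ∑ m ∈ Finset.Ico d (d + D * d), h m - ∑ m ∈ Finset.Ico (M + 1) (d + D * d), h m := by linarith
  have b4 : |∑ m ∈ Finset.Ico 1 (M + 1), h m| ≤ (∑ b ∈ Finset.range d,
      |∑ m ∈ Finset.Icc 1 D, u (d * m + b)|) + 2 * C * d := by
    rw [e4]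
    refine (abs_sub _ _).trans ?_
    have := abs_add_le (∑ m ∈ Finset.Ico 1 d, h m) (∑ m ∈ Finset.Ico d (d + D * d), h m)
    linarith
  have hMr : (0 : ℝ) < M := by exact_mod_cast hM0
  calc 1 / (M : ℝ) * |∑ m ∈ Finset.Ico 1 (M + 1), h m|
      ≤ 1 / (M : ℝ) * ((∑ b ∈ Finset.range d,
      |∑ m ∈ Finset.Icc 1 D, u (d * m + b)|) + 2 * C * d) := by gcongr
    _ = (∑ b ∈ Finset.range d,
      1 / (M : ℝ) * |∑ m ∈ Finset.Icc 1 D, u (d * m + b)|) + 2 * C * d * (1 / (M : ℝ)) := by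
        rw [mul_add, Finset.mul_sum]; ring
    _ ≤ _ := by
        gcongr with b _
        rw [abs_mul, abs_of_nonneg (by positivity : (0 : ℝ) ≤ 1 / (D : ℝ))]
        rcases Nat.eq_zero_or_pos D with h0 | h0
        · rw [h0]; simp
        · have : (0 : ℝ) < D := by exact_mod_cast h0
          gcongr


def InX {A : Type} (L : Lvl A) (s : ℤ) (x : ℤ → A) : Prop :=
  ∀ i : ℤ, ∃ b : L.B, ∀ m < L.n, x (s + i * L.n + m) = L.rd b m

lemma step_down {A : Type} {u : ℕ → ℝ} {tst : ℕ → Tst A} {k q tm : ℕ} {δ τ : ℝ} {L L' : Lvl A}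
    (h : Step u tst k q tm δ τ L L') (s : ℤ) (x : ℤ → A) (hx : InX L' s x) : InX L s x := by
  intro i
  have hq : 0 < q := by
    have := L'.hn
    rw [h.hn] at this
    exact Nat.pos_of_mul_pos_right this
  obtain ⟨b', hb'⟩ := hx (i / q)
  obtain ⟨c, hc, _⟩ := h.dec b'
  have hq' : (q : ℤ) ≠ 0 := by exact_mod_cast hq.ne'
  have h0 := Int.emod_nonneg i hq'
  have h1 := Int.emod_lt_of_pos i (by exact_mod_cast hq : (0 : ℤ) < q)
  obtain ⟨j, hj⟩ := Int.eq_ofNat_of_zero_le h0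
  have hjq : j < q := by rw [hj] at h1; exact_mod_cast h1
  refine ⟨c j, fun m hm => ?_⟩
  rw [← hc j hjq m hm, ← hb' (j * L.n + m) (by rw [h.hn]; nlinarith)]
  congr 1
  have := Int.mul_ediv_add_emod i q
  rw [h.hn]
  push_cast
  have e : i = q * (i / q) + j := by rw [← hj]; exact this.symm
  calc s + i * (L.n : ℤ) + m = s + (q * (i / q) + j) * (L.n : ℤ) + m := by rw [← e]
    _ = _ := by ring

lemma mod_aux {d n m r : ℕ} (hd : 0 < d) (hdn : d ∣ n) (hm : m < n) (h : m % d + r ≤ d) :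
    m + r ≤ n := by
  obtain ⟨b, rfl⟩ := hdn
  have h1 := Nat.div_add_mod m d
  have h2 : m / d < b := Nat.div_lt_of_lt_mul hm
  have h3 : d * (m / d + 1) ≤ d * b := Nat.mul_le_mul_left _ h2
  rw [mul_add] at h3
  omega

section
variable {A : Type} {u : ℕ → ℝ} {C : ℝ} {tst : ℕ → Tst A} {q : ℕ → ℕ} {L : ℕ → Lvl A}

lemma nn_dvd (q : ℕ → ℕ) {a b : ℕ} (h : a ≤ b) : nn q a ∣ nn q b :=
  Finset.prod_dvd_prod_of_subset _ _ _ (by simpa using h)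

lemma drift_total (hn : ∀ k, (L k).n = nn q k)
    (hL : ∀ k, Step u tst k (q k) (nn q (k + 3)) (1 / ((k : ℝ) + 1)) ((1 / 2) ^ (k + 1)) (L k) (L (k + 1)))
    (T : Tst A) (k0 k : ℕ) (hk : k0 ≤ k) : ∀ m < (L k).n, m % (L k0).n + T.r ≤ (L k0).n →
    |pp (L k) T m - pp (L k0) T (m % (L k0).n)| ≤ 2 * ((1 / 2) ^ k0 - (1 / 2) ^ k) := by
  induction k, hk using Nat.le_induction with
  | base => intro m hm _; rw [Nat.mod_eq_of_lt hm]; simp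
  | succ k hk ih =>
    intro m hm hr
    have hdvd : (L k0).n ∣ (L k).n := by rw [hn, hn]; exact nn_dvd q hk
    have hpos := (L k).hn
    have hm' : m % (L k).n < (L k).n := Nat.mod_lt _ hpos
    have hmm : m % (L k).n % (L k0).n = m % (L k0).n := Nat.mod_mod_of_dvd _ hdvd
    have h1 := ih (m % (L k).n) hm' (by rw [hmm]; exact hr)
    rw [hmm] at h1
    have hlt : m / (L k).n < q k := by
      apply Nat.div_lt_of_lt_mul
      rw [(hL k).hn] at hm; rwa [mul_comm]
    have h2 := (hL k).drift T (m / (L k).n) hlt (m % (L k).n) hm'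
      (mod_aux (L k0).hn hdvd hm' (by rw [hmm]; exact hr))
    rw [Nat.div_add_mod' m (L k).n] at h2
    have h3 := abs_sub_le (pp (L (k+1)) T m) (pp (L k) T (m % (L k).n))
      (pp (L k0) T (m % (L k0).n))
    have h4 : 2 * ((1 : ℝ) / 2) ^ (k + 1) = 2 * ((1 / 2) ^ k - (1 / 2) ^ (k + 1)) := by
      rw [pow_succ]; ring
    rw [h4] at h2
    linarith

lemma bad_count (d r a : ℕ) (hd : 0 < d) :
    ∑ m ∈ Finset.range (a * d), (if m % d + r ≤ d then (0 : ℝ) else 1) ≤ a * r := by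
  rw [sum_range_mul']
  have : ∀ i ∈ Finset.range a,
      ∑ m ∈ Finset.range d, (if (i * d + m) % d + r ≤ d then (0 : ℝ) else 1) ≤ r := by
    intro i _
    have e : ∑ m ∈ Finset.range d, (if (i * d + m) % d + r ≤ d then (0 : ℝ) else 1) =
      ∑ m ∈ Finset.range d, (if m + r ≤ d then (0 : ℝ) else 1) := by
      refine Finset.sum_congr rfl fun m hm => ?_
      rw [mul_comm, Nat.mul_add_mod, Nat.mod_eq_of_lt (Finset.mem_range.mp hm)]
    rw [e]
    have e2 : ∑ m ∈ Finset.range d, (if m + r ≤ d then (0 : ℝ) else 1) =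
      ((Finset.range d).filter (fun m => ¬ (m + r ≤ d))).card := by
      rw [Finset.card_filter]; push_cast
      refine Finset.sum_congr rfl fun m _ => ?_
      by_cases h : m + r ≤ d <;> simp [h]
    rw [e2]
    have : (Finset.range d).filter (fun m => ¬ (m + r ≤ d)) ⊆ Finset.Ico (d - r) d := by
      intro m hm
      simp only [Finset.mem_filter, Finset.mem_range, Finset.mem_Ico] at hm ⊢
      omega
    have h2 := Finset.card_le_card this
    rw [Nat.card_Ico] at h2
    exact_mod_cast (show _ ≤ r by omega)
  refine (Finset.sum_le_sum this).trans ?_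
  simp

lemma window (hC : 0 ≤ C) (hu : ∀ n, |u n| ≤ C) (hn : ∀ k, (L k).n = nn q k)
    (hL : ∀ k, Step u tst k (q k) (nn q (k + 3)) (1 / ((k : ℝ) + 1)) ((1 / 2) ^ (k + 1)) (L k) (L (k + 1)))
    (j k0 k : ℕ) (hk : k0 ≤ k) (hj : j ≤ k) (x : ℤ → A) (s : ℤ) (hx : InX (L (k + 1)) s x)
    (i : ℤ) (t : ℕ) (ht : (t : ℤ) = s + i * nn q (k + 1)) (htm : t ≤ nn q (k + 3)) :
    |∑ m ∈ Finset.range (nn q (k + 1)), ((tst j).φ (fun l => x (((t + m : ℕ) : ℤ) + l)) -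
      pp (L k0) (tst j) (m % nn q k0)) * u (t + m)| ≤
      (1 / ((k : ℝ) + 1) + C * (2 * (1 / 2) ^ k0 + 4 * (tst j).r / nn q k0)) * nn q (k + 1) := by
  set T := tst j with hT
  obtain ⟨b', hb'⟩ := hx i
  obtain ⟨c, hc, hcor⟩ := (hL k).dec b'
  have hcor := hcor j hj t htm
  rw [hn] at hcor hc hb'
  rw [← hT] at hcor
  have hn1 : nn q (k + 1) = q k * nn q k := by simp [nn, Finset.prod_range_succ, mul_comm]
  have hnk : 0 < nn q k := by rw [← hn]; exact (L k).hn
  have hd : 0 < nn q k0 := by rw [← hn]; exact (L k0).hn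
  have hdk : nn q k0 ∣ nn q k := nn_dvd q hk
  set d := nn q k0
  let f : ℕ → ℝ := fun m => (T.φ (fun l => x (((t + m : ℕ) : ℤ) + l)) - pp (L k0) T (m % d)) * u (t + m)
  let g : ℕ → ℝ := fun m => (GG (L k) T (c (m / nn q k)) (m % nn q k) - pp (L k) T (m % nn q k)) * u (t + m)
  have hg : |∑ m ∈ Finset.range (nn q (k + 1)), g m| ≤ 1 / ((k : ℝ) + 1) * nn q (k + 1) := by
    rw [hn1, sum_range_mul']
    push_cast
    convert hcor using 2
    refine Finset.sum_congr rfl fun i _ => Finset.sum_congr rfl fun m hm => ?_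
    have hm := Finset.mem_range.mp hm
    have e1 : (i * nn q k + m) / nn q k = i := by
      rw [mul_comm, Nat.mul_add_div hnk, Nat.div_eq_of_lt hm, add_zero]
    have e2 : (i * nn q k + m) % nn q k = m := by
      rw [mul_comm, Nat.mul_add_mod, Nat.mod_eq_of_lt hm]
    simp only [g, e1, e2]
  have hfg : ∀ m ∈ Finset.range (nn q (k + 1)), |f m - g m| ≤
      C * (2 * (1 / 2) ^ k0) + C * 4 * (if m % d + T.r ≤ d then (0 : ℝ) else 1) := by
    intro m hm
    have hm := Finset.mem_range.mp hm
    have hm' : m % nn q k < nn q k := Nat.mod_lt _ hnk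
    have hdiv : m / nn q k < q k := by
      apply Nat.div_lt_of_lt_mul; rw [hn1] at hm; rwa [mul_comm]
    have hmm : m % nn q k % d = m % d := Nat.mod_mod_of_dvd _ hdk
    have e : f m - g m = ((T.φ (fun l => x (((t + m : ℕ) : ℤ) + l)) - pp (L k0) T (m % d)) -
      (GG (L k) T (c (m / nn q k)) (m % nn q k) - pp (L k) T (m % nn q k))) * u (t + m) := by
      simp only [f, g]; ring
    rw [e, abs_mul]
    have hp0 : (0 : ℝ) ≤ 2 * (1 / 2) ^ k0 := by positivity
    by_cases hr : m % d + T.r ≤ d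
    · rw [if_pos hr, mul_zero, add_zero, mul_comm C]
      have hmr : m % nn q k + T.r ≤ nn q k := mod_aux hd hdk hm' (by rw [hmm]; exact hr)
      have eφ : T.φ (fun l => x (((t + m : ℕ) : ℤ) + l)) =
          GG (L k) T (c (m / nn q k)) (m % nn q k) := by
        unfold GG
        rw [hn, if_pos hmr]
        apply T.loc
        intro l hl
        rw [← hc (m / nn q k) hdiv (m % nn q k + l) (by omega)]
        have e5 : m / nn q k * nn q k + (m % nn q k + l) = m + l := by
          rw [← add_assoc, Nat.div_add_mod']
        rw [e5, ← hb' (m + l) ?_]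
        · congr 1; rw [← ht]; push_cast; ring
        · rw [← e5, hn1]
          have : (m / nn q k + 1) * nn q k ≤ q k * nn q k := Nat.mul_le_mul_right _ hdiv
          rw [add_mul] at this
          omega
      have h1 := drift_total hn hL T k0 k hk (m % nn q k) (by rw [hn]; exact hm')
        (by rw [hn, hmm]; exact hr)
      rw [hn] at h1
      change |_ - pp (L k0) T (m % nn q k % d)| ≤ _ at h1
      rw [hmm] at h1
      have h2 : (0 : ℝ) ≤ (1 / 2) ^ k := by positivity
      rw [eφ]
      have e6 : GG (L k) T (c (m / nn q k)) (m % nn q k) - pp (L k0) T (m % d) -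
        (GG (L k) T (c (m / nn q k)) (m % nn q k) - pp (L k) T (m % nn q k)) =
        pp (L k) T (m % nn q k) - pp (L k0) T (m % d) := by ring
      rw [e6]
      gcongr
      · linarith
      · exact hu _
    · rw [if_neg hr, mul_one]
      have a1 := abs_le.mp (T.bd (fun l => x (((t + m : ℕ) : ℤ) + l)))
      have a2 := abs_le.mp (pp_bd (L k0) T (m % d))
      have a3 := abs_le.mp (GG_bd (L k) T (c (m / nn q k)) (m % nn q k))
      have a4 := abs_le.mp (pp_bd (L k) T (m % nn q k))
      have a5 : |(T.φ (fun l => x (((t + m : ℕ) : ℤ) + l)) - pp (L k0) T (m % d)) -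
        (GG (L k) T (c (m / nn q k)) (m % nn q k) - pp (L k) T (m % nn q k))| ≤ 4 :=
        abs_le.mpr ⟨by linarith, by linarith⟩
      have a6 : |(T.φ (fun l => x (((t + m : ℕ) : ℤ) + l)) - pp (L k0) T (m % d)) -
        (GG (L k) T (c (m / nn q k)) (m % nn q k) - pp (L k) T (m % nn q k))| * |u (t + m)|
        ≤ 4 * C := by gcongr; exact hu _
      have : 0 ≤ C * (2 * (1 / 2) ^ k0) := by positivity
      linarith
  obtain ⟨a, ha⟩ : d ∣ nn q (k + 1) := nn_dvd q (by omega)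
  have hbadc : ∑ m ∈ Finset.range (nn q (k + 1)), (if m % d + T.r ≤ d then (0 : ℝ) else 1) ≤
      T.r / d * nn q (k + 1) := by
    have := bad_count d T.r a hd
    rw [mul_comm a d, ← ha] at this
    refine this.trans (le_of_eq ?_)
    have hdr : (d : ℝ) ≠ 0 := by exact_mod_cast hd.ne'
    rw [ha]; push_cast; field_simp
  have hdiff : |∑ m ∈ Finset.range (nn q (k + 1)), f m - ∑ m ∈ Finset.range (nn q (k + 1)), g m| ≤
      C * (2 * (1 / 2) ^ k0) * nn q (k + 1) + C * 4 * (T.r / d * nn q (k + 1)) := by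
    rw [← Finset.sum_sub_distrib]
    refine (Finset.abs_sum_le_sum_abs _ _).trans ((Finset.sum_le_sum hfg).trans ?_)
    rw [Finset.sum_add_distrib,
      ← Finset.mul_sum _ (fun m => if m % d + T.r ≤ d then (0 : ℝ) else 1) (C * 4)]
    simp only [Finset.sum_const, Finset.card_range, nsmul_eq_mul]
    have : C * 4 * ∑ m ∈ Finset.range (nn q (k + 1)), (if m % d + T.r ≤ d then (0 : ℝ) else 1) ≤
      C * 4 * (T.r / d * nn q (k + 1)) := by gcongr
    linarith
  have h9 := abs_sub_abs_le_abs_sub (∑ m ∈ Finset.range (nn q (k + 1)), f m) (∑ m ∈ Finset.range (nn q (k + 1)), g m)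
  calc |∑ m ∈ Finset.range (nn q (k + 1)), f m| ≤ 1 / ((k : ℝ) + 1) * nn q (k + 1) +
      (C * (2 * (1 / 2) ^ k0) * nn q (k + 1) + C * 4 * (T.r / d * nn q (k + 1))) := by linarith
    _ = _ := by ring
end


lemma corr_word {A : Type} {u : ℕ → ℝ} {C : ℝ} {tst : ℕ → Tst A} {q : ℕ → ℕ} {L : ℕ → Lvl A}
    (hC : 0 ≤ C) (hu : ∀ n, |u n| ≤ C)
    (haper : ∀ a b : ℕ, 1 ≤ a →
      Tendsto (fun M : ℕ => (1 / (M : ℝ)) * ∑ m ∈ Finset.Icc 1 M, u (a * m + b))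
        atTop (nhds 0))
    (hqk : ∀ k, k ≤ q k) (hq2 : ∀ k, 2 ≤ q k) (hn : ∀ k, (L k).n = nn q k)
    (hL : ∀ k, Step u tst k (q k) (nn q (k + 3)) (1 / ((k : ℝ) + 1)) ((1 / 2) ^ (k + 1)) (L k) (L (k + 1)))
    (j : ℕ) (x : ℤ → A) (hx : ∀ k, ∃ s, InX (L k) s x) :
    Tendsto (fun M : ℕ => (1 / (M : ℝ)) * ∑ m ∈ Finset.Icc 1 M,
      (tst j).φ (fun l => x ((m : ℤ) + l)) * u m) atTop (nhds 0) := by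
  set T := tst j with hT
  have hpos : ∀ k, 0 < nn q k := fun k => by rw [← hn]; exact (L k).hn
  have hsucc : ∀ k, nn q (k + 1) = nn q k * q k := fun k => by simp [nn, Finset.prod_range_succ]
  have hgrow : ∀ k, k < nn q k := by
    intro k
    induction k with
    | zero => exact hpos 0
    | succ k ih => rw [hsucc]; have := hq2 k; nlinarith
  have hmono : StrictMono (nn q) := strictMono_nat_of_lt_succ fun k => by
    rw [hsucc]; have := hq2 k; have := hpos k; nlinarith
  rw [Metric.tendsto_atTop]
  intro η hη
  -- choice of k0
  have t1 : Tendsto (fun k : ℕ => C * (2 * (1 / 2 : ℝ) ^ k + 4 * T.r * (1 / (k : ℝ)))) atTop (nhds 0) := by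
    have a1 : Tendsto (fun k : ℕ => (1 / 2 : ℝ) ^ k) atTop (nhds 0) :=
      tendsto_pow_atTop_nhds_zero_of_lt_one (by norm_num) (by norm_num)
    have := ((a1.const_mul 2).add
      ((tendsto_one_div_atTop_nhds_zero_nat (𝕜 := ℝ)).const_mul (4 * (T.r : ℝ)))).const_mul C
    simpa using this
  have t2 : Tendsto (fun k : ℕ => 1 / ((k : ℝ) + 1)) atTop (nhds 0) :=
    tendsto_one_div_add_atTop_nhds_zero_nat
  have t3 : Tendsto (fun k : ℕ => 4 * C * (1 / ((k : ℝ) + 1))) atTop (nhds 0) := by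
    simpa using t2.const_mul (4 * C)
  have hη4 : 0 < η / 5 := by positivity
  obtain ⟨k0, hk0⟩ := eventually_atTop.mp (((t1.eventually (gt_mem_nhds hη4)).and
    (t2.eventually (gt_mem_nhds hη4))).and ((t3.eventually (gt_mem_nhds hη4)).and
    (eventually_ge_atTop (j + 1))))
  have hk0j := (hk0 k0 le_rfl).2.2
  set d := nn q k0 with hd
  have hdpos : 0 < d := hpos k0
  have hP : ∀ σ : Fin d, ∀ᶠ M : ℕ in atTop,
      |(1 / (M : ℝ)) * ∑ m ∈ Finset.Icc 1 M, pp (L k0) T ((m + σ) % d) * u m| < η / 5 := by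
    intro σ
    have := (periodic_corr u C hu haper d hdpos σ (pp (L k0) T) (pp_bd (L k0) T)).abs
    rw [abs_zero] at this
    exact this.eventually (gt_mem_nhds hη4)
  obtain ⟨M1, hM1⟩ := eventually_atTop.mp (eventually_all.mpr hP)
  refine ⟨max M1 (nn q (k0 + 2)), fun M hM => ?_⟩
  have hMM1 : M1 ≤ M := le_trans (le_max_left _ _) hM
  have hMk : nn q (k0 + 2) ≤ M := le_trans (le_max_right _ _) hM
  -- choice of k
  obtain ⟨k, hkk, hk1, hk2⟩ : ∃ k, k0 ≤ k ∧ nn q (k + 2) ≤ M ∧ M ≤ nn q (k + 3) := by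
    have hex : ∃ l, M ≤ nn q (k0 + l + 3) := ⟨M, by have := hgrow (k0 + M + 3); omega⟩
    classical
    let l := Nat.find hex
    have hl := Nat.find_spec hex
    rcases Nat.eq_zero_or_pos l with h0 | h0
    · refine ⟨k0, le_rfl, hMk, ?_⟩
      change M ≤ nn q (k0 + l + 3) at hl
      rwa [h0] at hl
    · refine ⟨k0 + l, by omega, ?_, hl⟩
      have := Nat.find_min hex (m := l - 1) (by show l - 1 < l; omega)
      have e : k0 + (l - 1) + 3 = k0 + l + 2 := by omega
      rw [e] at this
      omega
  obtain ⟨s, hs⟩ := hx (k + 1)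
  set n := nn q (k + 1) with hnn
  have hnpos : 0 < n := hpos _
  have hdn : d ∣ n := nn_dvd q (by omega)
  -- first window
  have hnz : (n : ℤ) ≠ 0 := by exact_mod_cast hnpos.ne'
  obtain ⟨t0, ht0⟩ := Int.eq_ofNat_of_zero_le
    (show 0 ≤ (s - 1) % (n : ℤ) + 1 by have := Int.emod_nonneg (s - 1) hnz; omega)
  have ht1 : 1 ≤ t0 := by have := Int.emod_nonneg (s - 1) hnz; omega
  have ht2 : t0 ≤ n := by
    have := Int.emod_lt_of_pos (s - 1) (by exact_mod_cast hnpos : (0 : ℤ) < n); omega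
  have ht3 : (t0 : ℤ) = s + (-((s - 1) / n)) * n := by
    have := Int.mul_ediv_add_emod (s - 1) n
    have h5 : (t0 : ℤ) = (s - 1) % n + 1 := ht0.symm
    rw [h5]; linarith
  let σ := (d * t0 - t0) % d
  have hσ : σ < d := Nat.mod_lt _ hdpos
  have hσm : ∀ i m : ℕ, (t0 + i * n + m + σ) % d = m % d := by
    intro i m
    simp only [σ]
    rw [Nat.add_mod, Nat.mod_mod, ← Nat.add_mod]
    have h6 : t0 ≤ d * t0 := Nat.le_mul_of_pos_left _ hdpos
    obtain ⟨a, ha⟩ := hdn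
    have : t0 + i * n + m + (d * t0 - t0) = d * (t0 + i * a) + m := by
      rw [ha]
      have : d * (t0 + i * a) = d * t0 + i * (d * a) := by ring
      omega
    rw [this, Nat.mul_add_mod]
  let h : ℕ → ℝ := fun m => (T.φ (fun l => x ((m : ℤ) + l)) - pp (L k0) T ((m + σ) % d)) * u m
  have hh : ∀ m, |h m| ≤ 2 * C := by
    intro m
    simp only [h]
    rw [abs_mul]
    have a1 := T.bd (fun l => x ((m : ℤ) + l))
    have a2 := pp_bd (L k0) T ((m + σ) % d)
    have a3 := (abs_sub (T.φ (fun l => x ((m : ℤ) + l))) (pp (L k0) T ((m + σ) % d)))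
    have a4 := hu m
    gcongr
    linarith
  have hMpos : (0 : ℝ) < M := by
    have : 0 < M := lt_of_lt_of_le (hpos _) hMk
    exact_mod_cast this
  set κ : ℝ := 1 / ((k : ℝ) + 1) + C * (2 * (1 / 2) ^ k0 + 4 * T.r / d) with hκ
  have hsum := sum_windows h (2 * C) hh n t0 M hnpos ht1 ht2 κ (by positivity) (by
    intro i hi
    have := window hC hu hn hL j k0 k hkk (by omega) x s hs (-((s - 1) / n) + i) (t0 + i * n)
      (by push_cast; rw [ht3]; ring) (by omega)
    refine le_trans (le_of_eq ?_) this
    congr 1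
    refine Finset.sum_congr rfl fun m _ => ?_
    simp only [h]
    rw [hσm])
  have hκb : κ < 2 * (η / 5) := by
    have a1 := (hk0 k0 le_rfl).1.1
    have a2 := (hk0 k hkk).1.2
    have a3 : C * (2 * (1 / 2) ^ k0 + 4 * T.r / d) ≤ C * (2 * (1 / 2 : ℝ) ^ k0 + 4 * T.r * (1 / (k0 : ℝ))) := by
      have a4 : (k0 : ℝ) ≤ d := by exact_mod_cast (hgrow k0).le
      have a5 : (0 : ℝ) < k0 := by exact_mod_cast (show 0 < k0 by omega)
      rw [mul_one_div]
      gcongr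
    rw [hκ]; linarith
  have hnM : 2 * (2 * C) * n ≤ η / 5 * M := by
    have a1 := (hk0 k hkk).2.1
    have a2 : (n : ℝ) * ((k : ℝ) + 1) ≤ M := by
      have : n * (k + 1) ≤ M := by
        refine le_trans ?_ hk1
        rw [hsucc (k + 1)]
        exact Nat.mul_le_mul_left _ (hqk _)
      exact_mod_cast this
    rw [mul_one_div, div_lt_iff₀ (by positivity)] at a1
    have a3 : 4 * C * n ≤ η / 5 * (k + 1) * n := by gcongr
    have a4 : η / 5 * (n * ((k : ℝ) + 1)) ≤ η / 5 * M := by gcongr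
    linarith
  have hPM := hM1 M hMM1 ⟨σ, hσ⟩
  have hsplit : ∑ m ∈ Finset.Icc 1 M, T.φ (fun l => x ((m : ℤ) + l)) * u m =
      ∑ m ∈ Finset.Icc 1 M, h m + ∑ m ∈ Finset.Icc 1 M, pp (L k0) T ((m + σ) % d) * u m := by
    rw [← Finset.sum_add_distrib]
    refine Finset.sum_congr rfl fun m _ => ?_
    simp only [h]; ring
  rw [Real.dist_eq, sub_zero, hsplit, mul_add]
  refine lt_of_le_of_lt (abs_add_le _ _) ?_
  have hfin : |1 / (M : ℝ) * ∑ m ∈ Finset.Icc 1 M, h m| ≤ 3 * (η / 5) := by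
    rw [abs_mul, abs_of_nonneg (by positivity : (0 : ℝ) ≤ 1 / (M : ℝ)), one_div_mul_eq_div,
      div_le_iff₀ hMpos]
    have : κ * M ≤ 2 * (η / 5) * M := by gcongr
    linarith
  linarith


lemma InX_shift {A : Type} {L : Lvl A} {s : ℤ} {x : ℤ → A} (a : ℤ) (h : InX L s x) :
    InX L (s - a) (fun n => x (n + a)) := by
  intro i
  obtain ⟨b, hb⟩ := h i
  refine ⟨b, fun m hm => ?_⟩
  rw [← hb m hm]
  show x _ = x _
  congr 1; ring

lemma InX_mod {A : Type} {L : Lvl A} {s : ℤ} {x : ℤ → A} (h : InX L s x) :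
    ∃ t < L.n, InX L (t : ℕ) x := by
  have hn : (0 : ℤ) < L.n := by exact_mod_cast L.hn
  have h0 := Int.emod_nonneg s hn.ne'
  have h1 := Int.emod_lt_of_pos s hn
  obtain ⟨j, hj⟩ := Int.eq_ofNat_of_zero_le h0
  refine ⟨j, by rw [hj] at h1; exact_mod_cast h1, fun i => ?_⟩
  obtain ⟨b, hb⟩ := h (i - s / L.n)
  refine ⟨b, fun m hm => ?_⟩
  rw [← hb m hm]
  congr 1
  have e := Int.mul_ediv_add_emod s L.n
  rw [hj] at e
  push_cast at e
  linear_combination e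

lemma InX_closed {A : Type} [TopologicalSpace A] [DiscreteTopology A] (L : Lvl A) :
    IsClosed {x : ℤ → A | ∃ s, InX L s x} := by
  have : {x : ℤ → A | ∃ s, InX L s x} = ⋃ t ∈ Finset.range L.n, ⋂ i : ℤ, ⋃ b : L.B,
      ⋂ m ∈ Finset.range L.n, {x : ℤ → A | x ((t : ℕ) + i * L.n + m) = L.rd b m} := by
    ext x
    simp only [Set.mem_setOf_eq, Set.mem_iUnion, Set.mem_iInter, Finset.mem_range]
    constructor
    · rintro ⟨s, hs⟩
      obtain ⟨t, ht, h⟩ := InX_mod hs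
      exact ⟨t, ht, h⟩
    · rintro ⟨t, ht, h⟩
      exact ⟨t, h⟩
  rw [this]
  refine isClosed_biUnion_finset fun t _ => isClosed_iInter fun i => isClosed_iUnion_of_finite fun b =>
    isClosed_biInter fun m _ => isClosed_eq (continuous_apply _) continuous_const

def per {A : Type} (L : Lvl A) (b : L.B) : ℤ → A := fun z => L.rd b (z % L.n).toNat

lemma per_InX {A : Type} (L : Lvl A) (b : L.B) : InX L 0 (per L b) := by
  intro i
  refine ⟨b, fun m hm => ?_⟩
  unfold per
  have : (0 + i * (L.n : ℤ) + m) % L.n = m := by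
    rw [zero_add, add_comm, Int.add_mul_emod_self_right]
    exact Int.emod_eq_of_lt (by positivity) (by exact_mod_cast hm)
  rw [this]; simp

lemma per_apply {A : Type} (L : Lvl A) (b : L.B) (m : ℕ) (hm : m < L.n) :
    per L b m = L.rd b m := by
  unfold per
  rw [Int.emod_eq_of_lt (by positivity) (by exact_mod_cast hm)]; simp

section
variable {A : Type} [Fintype A] {u : ℕ → ℝ} {tst : ℕ → Tst A} {q : ℕ → ℕ} {L : ℕ → Lvl A}

lemma step_downs
    (hL : ∀ k, Step u tst k (q k) (nn q (k + 3)) (1 / ((k : ℝ) + 1)) ((1 / 2) ^ (k + 1)) (L k) (L (k + 1)))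
    (k d : ℕ) (s : ℤ) (x : ℤ → A) (h : InX (L (k + d)) s x) : InX (L k) s x := by
  induction d with
  | zero => exact h
  | succ d ih => exact ih (step_down (hL (k + d)) s x h)

def wd (A : Type) (n : ℕ) (x : ℤ → A) : Fin n → A := fun i => x (i : ℕ)

lemma word_count [TopologicalSpace A] [DiscreteTopology A] [Nonempty A] (ε : ℝ)
    (hn : ∀ k, (L k).n = nn q k)
    (hL : ∀ k, Step u tst k (q k) (nn q (k + 3)) (1 / ((k : ℝ) + 1)) ((1 / 2) ^ (k + 1)) (L k) (L (k + 1)))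
    (hent : ∀ k : ℕ, (nn q k : ℝ) * (Real.log (Fintype.card A) - ε) ≤ Real.log (Fintype.card (L k).B))
    (k : ℕ) : Real.exp ((nn q k : ℝ) * (Real.log (Fintype.card A) - ε)) ≤
      ((wd A (nn q k) '' {x | ∀ k, ∃ s, InX (L k) s x}).ncard : ℝ) := by
  classical
  set X : Set (ℤ → A) := {x | ∀ k, ∃ s, InX (L k) s x} with hX
  set n := nn q k with hnk
  let K : ℕ → Set (ℤ → A) := fun j => {x | ∀ l ≤ j, ∃ s, InX (L l) s x}
  have hwc : Continuous (wd A n) := continuous_pi fun i => continuous_apply _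
  have hKc : ∀ j, IsClosed (K j) := by
    intro j
    have : K j = ⋂ l, ⋂ (_ : l ≤ j), {x : ℤ → A | ∃ s, InX (L l) s x} := by
      ext x; simp [K]
    rw [this]
    exact isClosed_iInter fun l => isClosed_iInter fun _ => InX_closed _
  have hKm : ∀ i j, i ≤ j → K j ⊆ K i := fun i j hij x hx l hl => hx l (hl.trans hij)
  have hw : ∀ w : Fin n → A, ∃ j, w ∈ wd A n '' K j → w ∈ wd A n '' X := by
    intro w
    by_contra hcon
    push Not at hcon
    have hw := (hcon 0).2
    have := IsCompact.nonempty_iInter_of_sequence_nonempty_isCompact_isClosed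
      (fun j => K j ∩ wd A n ⁻¹' {w})
      (fun i => Set.inter_subset_inter_left _ (hKm i (i + 1) (by omega)))
      (fun i => by
        obtain ⟨x, hx, hxw⟩ := (hcon i).1
        exact ⟨x, hx, hxw⟩)
      (((hKc 0).inter (isClosed_singleton.preimage hwc)).isCompact)
      (fun i => ((hKc i).inter (isClosed_singleton.preimage hwc)))
    obtain ⟨x, hx⟩ := this
    rw [Set.mem_iInter] at hx
    exact hw ⟨x, fun l => (hx l).1 l le_rfl, (hx 0).2⟩
  choose jw hjw using hw
  set d := Finset.univ.sup jw with hd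
  set j := k + d with hj
  have hsub : ∀ w ∈ wd A n '' K j, w ∈ wd A n '' X := by
    intro w hw
    refine hjw w (Set.image_mono (hKm _ _ ?_) hw)
    have := Finset.le_sup (f := jw) (Finset.mem_univ w)
    omega
  obtain ⟨Q, hQ⟩ := nn_dvd q (show k ≤ j by omega)
  rw [← hnk] at hQ
  have hjpos : 0 < nn q j := by rw [← hn]; exact (L j).hn
  have hnpos : 0 < n := by rw [hnk, ← hn]; exact (L k).hn
  have hQpos : 0 < Q := by
    rcases Nat.eq_zero_or_pos Q with h | h
    · simp [hQ, h] at hjpos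
    · exact h
  -- injection
  have hmem : ∀ (b : (L j).B) (i : Fin Q),
      wd A n (fun z => per (L j) b (z + (i : ℕ) * n)) ∈ wd A n '' X := by
    intro b i
    apply hsub
    refine ⟨_, fun l hl => ?_, rfl⟩
    obtain ⟨e, he⟩ := Nat.exists_eq_add_of_le hl
    have h1 : InX (L (l + e)) 0 (per (L j) b) := by rw [← he]; exact per_InX _ _
    exact ⟨_, InX_shift _ (step_downs hL l e 0 _ h1)⟩
  let F : (L j).B → (Fin Q → (wd A n '' X : Set _)) := fun b i => ⟨_, hmem b i⟩
  have hF : Function.Injective F := by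
    intro b b' hbb
    apply (L j).inj
    intro m hm
    rw [hn, hQ] at hm
    have h1 : m / n < Q := Nat.div_lt_of_lt_mul hm
    have h2 := congrArg Subtype.val (congrFun hbb ⟨m / n, h1⟩)
    have h3 := congrFun h2 ⟨m % n, Nat.mod_lt _ hnpos⟩
    simp only [F, wd] at h3
    have e : ((m % n : ℕ) : ℤ) + ((m / n : ℕ) : ℤ) * n = m := by
      have := Nat.mod_add_div m n
      rw [mul_comm] at this
      exact_mod_cast this
    rw [e, per_apply _ _ _ (by rw [hn, hQ]; exact hm), per_apply _ _ _ (by rw [hn, hQ]; exact hm)] at h3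
    exact h3
  have hcard := Fintype.card_le_of_injective F hF
  rw [Fintype.card_fun, Fintype.card_fin, ← Nat.card_eq_fintype_card (α := (wd A n '' X : Set _)),
    Nat.card_coe_set_eq] at hcard
  set c := (wd A n '' X).ncard with hc
  have hB : 0 < Fintype.card (L j).B := Fintype.card_pos
  have hcpos : 0 < c := by
    rcases Nat.eq_zero_or_pos c with h | h
    · rw [h, zero_pow hQpos.ne'] at hcard; omega
    · exact h
  have hc0 : (0 : ℝ) < c := by exact_mod_cast hcpos
  have h1 := hent j
  have h2 : Real.log (Fintype.card (L j).B) ≤ Q * Real.log c := by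
    rw [← Real.log_pow]
    apply Real.log_le_log (by exact_mod_cast hB)
    exact_mod_cast hcard
  rw [← Real.le_log_iff_exp_le hc0]
  have hQ0 : (0 : ℝ) < Q := by exact_mod_cast hQpos
  rw [hQ] at h1
  push_cast at h1
  have h3 : (Q : ℝ) * (n * (Real.log (Fintype.card A) - ε)) ≤ Q * Real.log c := by
    calc _ = (n : ℝ) * Q * (Real.log (Fintype.card A) - ε) := by ring
      _ ≤ _ := h1.trans h2
  exact le_of_mul_le_mul_left h3 hQ0

end


lemma shift_iter {α : Type*} (x : ℤ → α) (m : ℕ) : shift^[m] x = fun n => x (n + m) := by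
  induction m with
  | zero => simp
  | succ m ih =>
    rw [Function.iterate_succ_apply', ih]
    funext n
    simp only [shift]
    congr 1; push_cast; ring

lemma mincard_ge {A : Type} [Finite A] (X : Set (ℤ → A)) (n : ℕ) :
    ((wd A n '' X).ncard : ℕ∞) ≤ Dynamics.coverMincard shift X {p | p.1 0 = p.2 0} n := by
  classical
  unfold Dynamics.coverMincard
  refine le_iInf fun s => le_iInf fun hs => ?_
  have hsub : wd A n '' X ⊆ wd A n '' (s : Set (ℤ → A)) := by
    rintro _ ⟨x, hx, rfl⟩
    obtain ⟨y, hy, hxy⟩ := hs hx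
    refine ⟨y, hy, ?_⟩
    funext i
    have h := Dynamics.mem_dynEntourage.mp hxy i i.2
    have h' : (shift^[i] x) 0 = (shift^[i] y) 0 := h
    rw [shift_iter, shift_iter] at h'
    simpa [wd] using h'.symm
  have h1 := Set.ncard_le_ncard hsub (Set.toFinite _)
  have h2 := Set.ncard_image_le (f := wd A n) s.finite_toSet
  rw [Set.ncard_coe_finset] at h2
  exact_mod_cast h1.trans h2

lemma entropy_ge {A : Type} [Fintype A] [UniformSpace A] [DiscreteUniformity A] (X : Set (ℤ → A)) (a : ℝ)
    (nk : ℕ → ℕ) (hk : ∀ k, k < nk k)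
    (h : ∀ k, Real.exp (nk k * a) ≤ ((wd A (nk k) '' X).ncard : ℝ)) :
    (a : EReal) ≤ Dynamics.coverEntropy shift X := by
  have hU : {p : (ℤ → A) × (ℤ → A) | p.1 0 = p.2 0} ∈ uniformity (ℤ → A) := by
    have h1 : UniformContinuous (fun x : ℤ → A => x 0) := Pi.uniformContinuous_proj _ 0
    have h2 := h1 (DiscreteUniformity.relId_mem_uniformity (X := A))
    exact h2
  refine le_trans ?_ (Dynamics.coverEntropyEntourage_le_coverEntropy shift X hU)
  unfold Dynamics.coverEntropyEntourage
  apply Frequently.le_expGrowthSup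
  rw [frequently_atTop]
  intro b
  refine ⟨nk b, (hk b).le, ?_⟩
  have h1 := mincard_ge X (nk b)
  have h2 := ENat.toENNReal_le.mpr h1
  refine le_trans ?_ h2
  have e : (a : EReal) * ((nk b : ℕ) : EReal) = ((nk b * a : ℝ) : EReal) := by
    rw [mul_comm]; push_cast; rfl
  rw [e, EReal.exp_coe]
  apply ENNReal.ofReal_le_of_le_toReal
  have h3 : ((((wd A (nk b) '' X).ncard : ℕ) : ℕ∞) : ENNReal).toReal = ((wd A (nk b) '' X).ncard : ℝ) := by
    rw [ENat.toENNReal_coe, ENNReal.toReal_natCast]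
  rw [h3]
  exact h b

/-- cylinder test functions -/
noncomputable def cyl {A : Type} (p : Σ r : ℕ, (Fin r → A)) : Tst A := by
  classical
  exact
  { r := p.1
    φ := fun y => if ∀ i : Fin p.1, y i = p.2 i then 1 else 0
    bd := fun y => by split_ifs <;> simp
    loc := fun y y' h => by
      have : (∀ i : Fin p.1, y i = p.2 i) ↔ (∀ i : Fin p.1, y' i = p.2 i) :=
        forall_congr' fun i => by rw [h i i.2]
      simp only [this] }

lemma fin_dep {A : Type} [Fintype A] [UniformSpace A] [DiscreteUniformity A] (X : Set (ℤ → A))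
    (hX : IsClosed X) (f : C(X, ℂ)) (η : ℝ) (hη : 0 < η) :
    ∃ r : ℕ, ∀ x y : X, (∀ i : ℤ, -(r : ℤ) ≤ i → i ≤ r → x.1 i = y.1 i) → dist (f x) (f y) < η := by
  by_contra hcon
  push Not at hcon
  choose x y hxy hd using hcon
  haveI : CompactSpace X := isCompact_iff_compactSpace.mp hX.isCompact
  have huc : UniformContinuous f := CompactSpace.uniformContinuous_of_continuous f.continuous
  have hbasis := huc (Metric.dist_mem_uniformity hη)
  rw [Filter.mem_map, uniformity_subtype, Filter.mem_comap] at hbasis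
  obtain ⟨t, ht, hts⟩ := hbasis
  rw [Pi.uniformity, Filter.mem_iInf] at ht
  obtain ⟨I, hI, V, hV, rfl⟩ := ht
  have hbd : ∃ r : ℕ, ∀ i ∈ I, -(r : ℤ) ≤ i ∧ i ≤ r := by
    refine ⟨hI.toFinset.sup Int.natAbs, fun i hi => ?_⟩
    have := Finset.le_sup (f := Int.natAbs) (hI.mem_toFinset.mpr hi)
    omega
  obtain ⟨r, hr⟩ := hbd
  refine absurd (hd r) (not_le.mpr ?_)
  have : (x r, y r) ∈ (fun p : X × X => (f p.1, f p.2)) ⁻¹' {p | dist p.1 p.2 < η} := by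
    apply hts
    show ((x r).1, (y r).1) ∈ ⋂ i, V i
    rw [Set.mem_iInter]
    intro i
    have hVi := hV i
    rw [Filter.mem_comap] at hVi
    obtain ⟨W, hW, hWV⟩ := hVi
    apply hWV
    show ((x r).1 i, (y r).1 i) ∈ W
    rw [hxy r i (hr i i.2).1 (hr i i.2).2]
    exact refl_mem_uniformity hW
  exact this

lemma final_lim {A : Type} [Fintype A] [UniformSpace A] [DiscreteUniformity A]
    (X : Set (ℤ → A)) (hX : IsClosed X) (hinv : Set.MapsTo shift X X)
    (hinv' : ∀ x ∈ X, ∀ a : ℤ, (fun n => x (n + a)) ∈ X)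
    (u : ℕ → ℝ) (C : ℝ) (hC : 0 < C) (hu : ∀ n, |u n| ≤ C)
    (hcyl : ∀ x ∈ X, ∀ p, Tendsto (fun M : ℕ => (1 / (M : ℝ)) * ∑ m ∈ Finset.Icc 1 M,
      (cyl (A := A) p).φ (fun l => x ((m : ℤ) + l)) * u m) atTop (nhds 0))
    (f : C(X, ℂ)) (x : X) :
    Tendsto (fun M : ℕ => (1 / (M : ℂ)) * ∑ m ∈ Finset.Icc 1 M,
        f ((Set.MapsTo.restrict shift X X hinv)^[m] x) * (u m : ℂ)) atTop (nhds 0) := by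
  classical
  rw [Metric.tendsto_atTop]
  intro η hη
  obtain ⟨r, hr⟩ := fin_dep X hX f (η / (4 * C)) (by positivity)
  have hit : ∀ m : ℕ, ((Set.MapsTo.restrict shift X X hinv)^[m] x).1 = fun n => x.1 (n + m) := by
    intro m
    rw [← shift_iter]
    induction m with
    | zero => rfl
    | succ m ih =>
      rw [Function.iterate_succ_apply', Function.iterate_succ_apply', ← ih]; rfl
  set R := 2 * r + 1 with hR
  let x' : ℤ → A := fun n => x.1 (n + (-(r : ℤ)))
  have hx' : x' ∈ X := hinv' x.1 x.2 _
  let wdr : X → (Fin R → A) := fun y i => y.1 ((i : ℕ) - (r : ℤ))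
  let c : (Fin R → A) → ℂ := fun w => if h : ∃ y : X, wdr y = w then f h.choose else 0
  have hc : ∀ y : X, dist (f y) (c (wdr y)) < η / (4 * C) := by
    intro y
    have hex : ∃ z : X, wdr z = wdr y := ⟨y, rfl⟩
    have : c (wdr y) = f hex.choose := dif_pos hex
    rw [this]
    apply hr
    intro i hi1 hi2
    have h := congrFun hex.choose_spec ⟨(i + r).toNat, by omega⟩
    simp only [wdr] at h
    have e : (((i + r).toNat : ℕ) : ℤ) - r = i := by omega
    rw [e] at h
    exact h.symm
  let g : ℕ → ℂ := fun m => c (wdr ((Set.MapsTo.restrict shift X X hinv)^[m] x))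
  have hg : ∀ m : ℕ, g m = ∑ w : Fin R → A, c w * (((cyl (A := A) ⟨R, w⟩).φ (fun l => x' ((m : ℤ) + l)) : ℝ) : ℂ) := by
    intro m
    have hwm : ∀ w : Fin R → A, (cyl (A := A) ⟨R, w⟩).φ (fun l => x' ((m : ℤ) + l)) =
        if wdr ((Set.MapsTo.restrict shift X X hinv)^[m] x) = w then 1 else 0 := by
      intro w
      have : (∀ i : Fin R, x' ((m : ℤ) + (i : ℕ)) = w i) ↔
          wdr ((Set.MapsTo.restrict shift X X hinv)^[m] x) = w := by
        rw [funext_iff]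
        refine forall_congr' fun i => ?_
        simp only [wdr, hit, x']
        have : (m : ℤ) + (i : ℕ) + -(r : ℤ) = (i : ℕ) - (r : ℤ) + m := by ring
        rw [this]
      simp only [cyl]
      rw [if_congr this rfl rfl]
    have hsum : ∀ w0 : Fin R → A, c w0 = ∑ w, c w * (((if w0 = w then 1 else 0 : ℝ)) : ℂ) := by
      intro w0
      rw [Finset.sum_eq_single w0]
      · simp
      · intro b _ hb
        rw [if_neg (Ne.symm hb)]; simp
      · simp
    simp only [hwm]
    exact hsum _
  have hlim : Tendsto (fun M : ℕ => (1 / (M : ℂ)) * ∑ m ∈ Finset.Icc 1 M, g m * (u m : ℂ)) atTop (nhds 0) := by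
    have h1 : Tendsto (fun M : ℕ => ∑ w : Fin R → A, c w * (((1 / (M : ℝ)) * ∑ m ∈ Finset.Icc 1 M,
      (cyl (A := A) ⟨R, w⟩).φ (fun l => x' ((m : ℤ) + l)) * u m : ℝ) : ℂ)) atTop
        (nhds (∑ w : Fin R → A, c w * ((0 : ℝ) : ℂ))) := by
      refine tendsto_finset_sum _ fun w _ => Tendsto.const_mul _ ?_
      exact (Complex.continuous_ofReal.tendsto 0).comp (hcyl x' hx' ⟨R, w⟩)
    simp only [Complex.ofReal_zero, mul_zero, Finset.sum_const_zero] at h1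
    refine h1.congr fun M => ?_
    simp only [hg, Complex.ofReal_mul, Complex.ofReal_sum, Finset.sum_mul, Finset.mul_sum]
    rw [Finset.sum_comm]
    refine Finset.sum_congr rfl fun m _ => Finset.sum_congr rfl fun w _ => ?_
    push_cast
    ring
  rw [Metric.tendsto_atTop] at hlim
  obtain ⟨M0, hM0⟩ := hlim (η / 2) (by positivity)
  refine ⟨M0 + 1, fun M hM => ?_⟩
  have h2 := hM0 M (by omega)
  rw [dist_zero_right] at h2 ⊢
  have hMpos : (0 : ℝ) < M := by exact_mod_cast (by omega : 0 < M)
  have h3 : ‖(1 / (M : ℂ)) * ∑ m ∈ Finset.Icc 1 M,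
        f ((Set.MapsTo.restrict shift X X hinv)^[m] x) * (u m : ℂ) -
        (1 / (M : ℂ)) * ∑ m ∈ Finset.Icc 1 M, g m * (u m : ℂ)‖ ≤ η / 4 := by
    rw [← mul_sub, ← Finset.sum_sub_distrib, norm_mul]
    have h4 : ‖∑ m ∈ Finset.Icc 1 M, (f ((Set.MapsTo.restrict shift X X hinv)^[m] x) * (u m : ℂ) -
        g m * (u m : ℂ))‖ ≤ M * (η / 4) := by
      refine (norm_sum_le _ _).trans ((Finset.sum_le_sum (g := fun _ => η / 4) fun m _ => ?_).trans ?_)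
      · rw [← sub_mul, norm_mul, Complex.norm_real]
        have h5 := (hc ((Set.MapsTo.restrict shift X X hinv)^[m] x)).le
        rw [dist_eq_norm] at h5
        calc _ ≤ η / (4 * C) * C := mul_le_mul h5 (hu m) (abs_nonneg _) (by positivity)
          _ = _ := by field_simp
      · simp
    have h6 : ‖(1 / (M : ℂ))‖ = 1 / M := by simp
    rw [h6]
    calc _ ≤ 1 / (M : ℝ) * (M * (η / 4)) := mul_le_mul_of_nonneg_left h4 (by positivity)
      _ = _ := by field_simp
  have h7 := norm_add_le (((1 / (M : ℂ)) * ∑ m ∈ Finset.Icc 1 M,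
        f ((Set.MapsTo.restrict shift X X hinv)^[m] x) * (u m : ℂ) -
        (1 / (M : ℂ)) * ∑ m ∈ Finset.Icc 1 M, g m * (u m : ℂ))) ((1 / (M : ℂ)) * ∑ m ∈ Finset.Icc 1 M, g m * (u m : ℂ))
  rw [sub_add_cancel] at h7
  linarith

/-- Downarowicz–Serafin: fix `N ≥ 2` and let `u : ℕ → ℝ` be bounded and aperiodic. Then
for every `ε > 0` there exists a subshift `X ⊆ {0,…,N−1}^ℤ` (closed and shift-invariant)
of topological entropy greater than `log N − ε` which is uncorrelated to `u`. -/
theorem downarowicz_serafin (N : ℕ) (hN : 2 ≤ N) (u : ℕ → ℝ) (C : ℝ)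
    (hbd : ∀ n : ℕ, |u n| ≤ C)
    (haper : ∀ a b : ℕ, 1 ≤ a →
      Tendsto (fun M : ℕ => (1 / (M : ℝ)) * ∑ m ∈ Finset.Icc 1 M, u (a * m + b))
        atTop (nhds 0))
    (ε : ℝ) (hε : 0 < ε) :
    ∃ X : Set (ℤ → ↥(Set.Iio N)), IsClosed X ∧ shift '' X = X ∧
      ∃ hinv : Set.MapsTo shift X X,
        ((Real.log N - ε : ℝ) : EReal) < Dynamics.coverEntropy shift X ∧
        ∀ (f : C(X, ℂ)) (x : X),
          Tendsto
            (fun M : ℕ => (1 / (M : ℂ)) *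
              ∑ m ∈ Finset.Icc 1 M,
                f ((Set.MapsTo.restrict shift X X hinv)^[m] x) * (u m : ℂ))
            atTop (nhds 0) := by
  haveI : Nonempty ↥(Set.Iio N) := ⟨⟨0, by simp; omega⟩⟩
  have hC : 0 < |C| + 1 := by positivity
  have hu : ∀ n, |u n| ≤ |C| + 1 := fun n => by
    have := hbd n
    have := le_abs_self C
    linarith
  haveI : Nonempty (Σ r : ℕ, (Fin r → ↥(Set.Iio N))) := ⟨⟨0, Fin.elim0⟩⟩
  obtain ⟨en, hen⟩ := exists_surjective_nat (Σ r : ℕ, (Fin r → ↥(Set.Iio N)))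
  obtain ⟨q, L, hqk, hq2, hn, hL, hent⟩ := exists_levels u (|C| + 1) hC hu (fun j => cyl (en j))
    (ε / 2) (by positivity)
  set X : Set (ℤ → ↥(Set.Iio N)) := {x | ∀ k, ∃ s, InX (L k) s x} with hX
  have hcl : IsClosed X := by
    have : X = ⋂ k, {x | ∃ s, InX (L k) s x} := by
      ext x; simp [hX]
    rw [this]
    exact isClosed_iInter fun k => InX_closed _
  have htr : ∀ x ∈ X, ∀ a : ℤ, (fun n => x (n + a)) ∈ X := by
    intro x hx a k
    obtain ⟨s, hs⟩ := hx k
    exact ⟨_, InX_shift a hs⟩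
  have hinv : Set.MapsTo shift X X := fun x hx => htr x hx 1
  refine ⟨X, hcl, ?_, hinv, ?_, ?_⟩
  · apply Set.Subset.antisymm hinv.image_subset
    intro x hx
    refine ⟨_, htr x hx (-1), ?_⟩
    funext n
    simp [shift]
  · have hgrow : ∀ k, k < nn q k := by
      intro k
      induction k with
      | zero => simp [nn]
      | succ k ih =>
        have : nn q (k + 1) = nn q k * q k := by simp [nn, Finset.prod_range_succ]
        rw [this]
        have := hq2 k
        nlinarith
    have := entropy_ge X (Real.log (Fintype.card ↥(Set.Iio N)) - ε / 2) (nn q) hgrow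
      (fun k => word_count (ε / 2) hn hL hent k)
    refine lt_of_lt_of_le ?_ this
    rw [EReal.coe_lt_coe_iff]
    have : Fintype.card ↥(Set.Iio N) = N := by simp
    rw [this]
    linarith
  · intro f x
    refine final_lim X hcl hinv htr u _ hC hu ?_ f x
    intro x hx p
    obtain ⟨j, rfl⟩ := hen p
    exact corr_word hC.le hu haper hqk hq2 hn hL j x hx
end
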